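/- arXiv:2507.15160 — 18 statements merged into one kernel-verified Lean document; each statement's English description precedes it below -/
import Mathlib

section
/- Let a : ℕ → ℂ and R > 0 be such that the power series ∑_{n=0}^∞ a_n w^n converges absolutely for every complex w with |w| < R; write f(w) = ∑_{n=0}^∞ a_n w^n for |w| < R. Let λ, x, y, z be complex numbers with |λ| < 1, |y| < |x|, and |x·z| < R. Then both series below converge and ∑_{n=0}^∞ a_n · x^{n+1}/(x − λ^n y) · z^n = ∑_{k=0}^∞ (y/x)^k · f(λ^k x z). -/
/-- The generalized Lambert series identity:
`∑ₙ aₙ x^(n+1)/(x − λ^n y) zⁿ = ∑ₖ (y/x)ᵏ f(λᵏ x z)` where `f(w) = ∑ₙ aₙ wⁿ`. -/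
theorem generalized_lambert_series (a : ℕ → ℂ) (R : ℝ) (hR : 0 < R)
    (habs : ∀ w : ℂ, ‖w‖ < R → Summable (fun n : ℕ => ‖a n * w ^ n‖))
    (l x y z : ℂ) (hl : ‖l‖ < 1) (hyx : ‖y‖ < ‖x‖) (hxz : ‖x * z‖ < R) :
    Summable (fun n : ℕ => a n * (x ^ (n + 1) / (x - l ^ n * y)) * z ^ n) ∧
    Summable (fun k : ℕ => (y / x) ^ k * ∑' m : ℕ, a m * (l ^ k * x * z) ^ m) ∧
    ∑' n : ℕ, a n * (x ^ (n + 1) / (x - l ^ n * y)) * z ^ n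
      = ∑' k : ℕ, (y / x) ^ k * ∑' m : ℕ, a m * (l ^ k * x * z) ^ m := by
  have hx : x ≠ 0 := norm_pos_iff.mp ((norm_nonneg y).trans_lt hyx)
  have hq : ‖y / x‖ < 1 := by
    rw [norm_div]
    exact (div_lt_one (norm_pos_iff.mpr hx)).mpr hyx
  have hG : Summable (fun p : ℕ × ℕ => ‖a p.1 * (x * z) ^ p.1‖ * ‖y / x‖ ^ p.2) :=
    (habs _ hxz).mul_of_nonneg (summable_geometric_of_lt_one (norm_nonneg _) hq)
      (fun _ => norm_nonneg _) (fun _ => by positivity)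
  have hln : ∀ n : ℕ, ‖l ^ n‖ ≤ 1 := fun n => by
    rw [norm_pow]
    exact pow_le_one₀ (norm_nonneg _) hl.le
  have hF : Summable (fun p : ℕ × ℕ => a p.1 * (x * z) ^ p.1 * (l ^ p.1 * (y / x)) ^ p.2) := by
    refine Summable.of_norm_bounded hG ?_
    rintro ⟨n, k⟩
    simp only
    rw [norm_mul, norm_pow (l ^ n * (y / x)), norm_mul (l ^ n)]
    gcongr
    exact mul_le_of_le_one_left (norm_nonneg _) (hln n)
  have hlt : ∀ n : ℕ, ‖l ^ n * (y / x)‖ < 1 := fun n => by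
    rw [norm_mul]
    exact (mul_le_of_le_one_left (norm_nonneg _) (hln n)).trans_lt hq
  have h1 : ∀ n : ℕ, ∑' k : ℕ, a n * (x * z) ^ n * (l ^ n * (y / x)) ^ k
      = a n * (x ^ (n + 1) / (x - l ^ n * y)) * z ^ n := fun n => by
    rw [tsum_mul_left, tsum_geometric_of_norm_lt_one (hlt n)]
    have e : 1 - l ^ n * (y / x) = (x - l ^ n * y) / x := by
      field_simp
    rw [e, inv_div, mul_pow, pow_succ]
    ring
  have h2 : ∀ k : ℕ, ∑' n : ℕ, a n * (x * z) ^ n * (l ^ n * (y / x)) ^ k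
      = (y / x) ^ k * ∑' m : ℕ, a m * (l ^ k * x * z) ^ m := fun k => by
    rw [← tsum_mul_left]
    refine tsum_congr fun n => ?_
    have e : (l ^ n) ^ k = (l ^ k) ^ n := pow_right_comm l n k
    rw [mul_pow (l ^ n), e, mul_assoc (l ^ k), mul_pow (l ^ k)]
    ring
  have hs1 := hF.prod
  have hs2 := hF.prod_symm.prod
  have hc := hF.tsum_comm (f := fun n k => a n * (x * z) ^ n * (l ^ n * (y / x)) ^ k)
  simp only [Prod.swap, h1, h2] at hs1 hs2 hc
  exact ⟨hs1, hs2, hc.symm⟩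
end

section
/- (Mehler's formula) Let a : ℕ → ℂ and R > 0 be such that the power series ∑_{n=0}^∞ a_n u^n converges absolutely for every complex u with |u| < R; write f(u) = ∑_{n=0}^∞ a_n u^n for |u| < R. Let λ, x, y, z, w, t be complex numbers with |λ| < 1, |y| < |x|, |w| < |z|, and |t·x·z| < R. Then ∑_{n=0}^∞ a_n · x^{n+1}/(x − λ^n y) · z^{n+1}/(z − λ^n w) · t^n = ∑_{k=0}^∞ ∑_{n=0}^∞ (w/z)^k (y/x)^n f(λ^{k+n} t x z), where the right-hand side is an absolutely convergent double series. -/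
/-- Mehler's formula for generalized Lambert series. -/
theorem generalized_lambert_mehler (a : ℕ → ℂ) (R : ℝ) (hR : 0 < R)
    (habs : ∀ u : ℂ, ‖u‖ < R → Summable (fun n : ℕ => ‖a n * u ^ n‖))
    (l x y z w t : ℂ) (hl : ‖l‖ < 1) (hyx : ‖y‖ < ‖x‖) (hwz : ‖w‖ < ‖z‖)
    (htxz : ‖t * x * z‖ < R) :
    Summable (fun p : ℕ × ℕ =>
      ‖(w / z) ^ p.1 * (y / x) ^ p.2 *
        ∑' m : ℕ, a m * (l ^ (p.1 + p.2) * t * x * z) ^ m‖) ∧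
    ∑' n : ℕ, a n * (x ^ (n + 1) / (x - l ^ n * y)) *
        (z ^ (n + 1) / (z - l ^ n * w)) * t ^ n
      = ∑' k : ℕ, ∑' n : ℕ, (w / z) ^ k * (y / x) ^ n *
          ∑' m : ℕ, a m * (l ^ (k + n) * t * x * z) ^ m := by
  have hx0 : 0 < ‖x‖ := lt_of_le_of_lt (norm_nonneg _) hyx
  have hz0 : 0 < ‖z‖ := lt_of_le_of_lt (norm_nonneg _) hwz
  have hx : x ≠ 0 := norm_pos_iff.1 hx0
  have hz : z ≠ 0 := norm_pos_iff.1 hz0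
  have hq : ‖w / z‖ < 1 := by rw [norm_div]; exact (div_lt_one hz0).2 hwz
  have hp : ‖y / x‖ < 1 := by rw [norm_div]; exact (div_lt_one hx0).2 hyx
  let F : (ℕ × ℕ) × ℕ → ℂ := fun p =>
    (w / z) ^ p.1.1 * (y / x) ^ p.1.2 * (a p.2 * (l ^ (p.1.1 + p.1.2) * t * x * z) ^ p.2)
  have hG : Summable (fun p : (ℕ × ℕ) × ℕ =>
      (‖w / z‖ ^ p.1.1 * ‖y / x‖ ^ p.1.2) * ‖a p.2 * (t * x * z) ^ p.2‖) := by
    have h1 := (summable_geometric_of_lt_one (norm_nonneg _) hq).mul_of_nonneg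
      (summable_geometric_of_lt_one (norm_nonneg _) hp)
      (fun _ => by positivity) (fun _ => by positivity)
    exact h1.mul_of_nonneg (habs _ htxz) (fun _ => by positivity) (fun _ => by positivity)
  have hFn : Summable (fun p => ‖F p‖) := by
    refine Summable.of_nonneg_of_le (fun _ => norm_nonneg _) (fun p => ?_) hG
    obtain ⟨⟨k, n⟩, m⟩ := p
    have h1 : ‖l ^ (k + n)‖ ^ m ≤ 1 := by
      rw [norm_pow]
      exact pow_le_one₀ (by positivity) (pow_le_one₀ (norm_nonneg _) hl.le)
    have h2 : F ((k, n), m) =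
        ((w / z) ^ k * (y / x) ^ n * (a m * (t * x * z) ^ m)) * (l ^ (k + n)) ^ m := by
      simp only [F]
      rw [show l ^ (k + n) * t * x * z = (t * x * z) * l ^ (k + n) by ring,
        mul_pow (t * x * z)]
      ring
    rw [h2, norm_mul, norm_mul, norm_mul, norm_pow (w / z), norm_pow (y / x),
      norm_pow (l ^ (k + n))]
    exact mul_le_of_le_one_right (by positivity) h1
  have hF : Summable F := hFn.of_norm
  have hS : Summable (fun p : ℕ × ℕ =>
      ‖(w / z) ^ p.1 * (y / x) ^ p.2 *
        ∑' m : ℕ, a m * (l ^ (p.1 + p.2) * t * x * z) ^ m‖) := by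
    refine Summable.of_nonneg_of_le (fun _ => norm_nonneg _) (fun p => ?_) hFn.prod
    rw [← tsum_mul_left]
    exact norm_tsum_le_tsum_norm (hFn.prod_factor p)
  refine ⟨hS, ?_⟩
  have hR1 := hS.of_norm.tsum_prod
  dsimp only at hR1
  rw [← hR1]
  have hR2 : ∑' p : ℕ × ℕ, (w / z) ^ p.1 * (y / x) ^ p.2 *
        ∑' m : ℕ, a m * (l ^ (p.1 + p.2) * t * x * z) ^ m
      = ∑' p : ℕ × ℕ, ∑' m : ℕ, F (p, m) := by
    refine tsum_congr fun p => ?_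
    rw [← tsum_mul_left]
  rw [hR2, ← Summable.tsum_comm (f := fun p m => F (p, m)) hF]
  refine tsum_congr fun m => ?_
  have hlm : ‖l ^ m‖ ≤ 1 := by
    rw [norm_pow]; exact pow_le_one₀ (norm_nonneg _) hl.le
  have key : ∀ c : ℂ, ‖c‖ < 1 → ‖c * l ^ m‖ < 1 := fun c hc => by
    rw [norm_mul]
    exact lt_of_le_of_lt (mul_le_of_le_one_right (norm_nonneg _) hlm) hc
  have hq' := key _ hq
  have hp' := key _ hp
  have hne : ∀ c : ℂ, ‖c‖ < 1 → 1 - c ≠ 0 := fun c hc h => by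
    rw [← sub_eq_zero.1 h] at hc
    simp at hc
  have e1 : ∀ p : ℕ × ℕ, F (p, m) = (a m * (t * x * z) ^ m) *
      ((w / z * l ^ m) ^ p.1 * (y / x * l ^ m) ^ p.2) := by
    rintro ⟨k, n⟩
    simp only [F]
    rw [mul_pow (w / z), mul_pow (y / x), ← pow_mul, ← pow_mul,
      show l ^ (k + n) * t * x * z = (t * x * z) * l ^ (k + n) by ring,
      mul_pow (t * x * z), ← pow_mul, mul_comm m k, mul_comm m n, add_mul, pow_add]
    ring
  rw [tsum_congr e1, tsum_mul_left]
  have e2 := tsum_mul_tsum_of_summable_norm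
    (f := fun k : ℕ => (w / z * l ^ m) ^ k) (g := fun n : ℕ => (y / x * l ^ m) ^ n)
    (summable_norm_geometric_of_norm_lt_one hq') (summable_norm_geometric_of_norm_lt_one hp')
  rw [← e2, tsum_geometric_of_norm_lt_one hq', tsum_geometric_of_norm_lt_one hp']
  have d1 : x - l ^ m * y = x * (1 - y / x * l ^ m) := by field_simp
  have d2 : z - l ^ m * w = z * (1 - w / z * l ^ m) := by field_simp
  have n1 := hne _ hp'
  have n2 := hne _ hq'
  rw [d1, d2, pow_succ' x, pow_succ' z, mul_div_mul_left _ _ hx, mul_div_mul_left _ _ hz,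
    mul_pow, mul_pow, div_eq_mul_inv (x ^ m), div_eq_mul_inv (z ^ m)]
  ring
end

section
/- (Rogers formula) Let a, b : ℕ → ℂ and R₁, R₂ > 0 be such that ∑_{n=0}^∞ a_n u^n converges absolutely for |u| < R₁ with sum f(u), and ∑_{m=0}^∞ b_m u^m converges absolutely for |u| < R₂ with sum g(u). Let λ, x, y, t, s be complex numbers with |λ| < 1, |y| < |x|, |t·x| < R₁, and |s·x| < R₂. Then ∑_{n=0}^∞ ∑_{m=0}^∞ a_n b_m · x^{n+m+1}/(x − λ^{n+m} y) · t^n s^m = ∑_{k=0}^∞ (y/x)^k f(λ^k t x) g(λ^k s x), where the left-hand side is an absolutely convergent double series. -/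
/-- Rogers formula for generalized Lambert series. -/
theorem generalized_lambert_rogers (a b : ℕ → ℂ) (R₁ R₂ : ℝ)
    (hR₁ : 0 < R₁) (hR₂ : 0 < R₂)
    (ha : ∀ u : ℂ, ‖u‖ < R₁ → Summable (fun n : ℕ => ‖a n * u ^ n‖))
    (hb : ∀ u : ℂ, ‖u‖ < R₂ → Summable (fun m : ℕ => ‖b m * u ^ m‖))
    (l x y t s : ℂ) (hl : ‖l‖ < 1) (hyx : ‖y‖ < ‖x‖)
    (htx : ‖t * x‖ < R₁) (hsx : ‖s * x‖ < R₂) :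
    Summable (fun p : ℕ × ℕ =>
      ‖a p.1 * b p.2 * (x ^ (p.1 + p.2 + 1) / (x - l ^ (p.1 + p.2) * y)) *
        t ^ p.1 * s ^ p.2‖) ∧
    ∑' n : ℕ, ∑' m : ℕ, a n * b m *
        (x ^ (n + m + 1) / (x - l ^ (n + m) * y)) * t ^ n * s ^ m
      = ∑' k : ℕ, (y / x) ^ k * (∑' n : ℕ, a n * (l ^ k * t * x) ^ n) *
          (∑' m : ℕ, b m * (l ^ k * s * x) ^ m) := by
  have hx0 : 0 < ‖x‖ := lt_of_le_of_lt (norm_nonneg _) hyx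
  have hx : x ≠ 0 := norm_pos_iff.mp hx0
  have hq : ‖y / x‖ < 1 := by
    rw [norm_div, div_lt_one hx0]; exact hyx
  have hA := ha _ htx
  have hB := hb _ hsx
  have hG : Summable (fun k : ℕ => ‖(y / x) ^ k‖) := by
    simpa only [norm_pow] using summable_geometric_of_lt_one (norm_nonneg (y / x)) hq
  have hABG : Summable (fun p : (ℕ × ℕ) × ℕ =>
      ‖a p.1.1 * (t * x) ^ p.1.1‖ * ‖b p.1.2 * (s * x) ^ p.1.2‖ * ‖(y / x) ^ p.2‖) :=
    (hA.mul_of_nonneg hB (fun _ => norm_nonneg _) (fun _ => norm_nonneg _)).mul_of_nonneg hG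
      (fun _ => by positivity) (fun _ => norm_nonneg _)
  have hF : Summable (fun p : (ℕ × ℕ) × ℕ =>
      (a p.1.1 * (t * x) ^ p.1.1) * (b p.1.2 * (s * x) ^ p.1.2) *
        (y / x * l ^ (p.1.1 + p.1.2)) ^ p.2) := by
    refine Summable.of_norm_bounded hABG (fun p => ?_)
    rw [norm_mul, norm_mul, mul_pow (y / x), norm_mul ((y / x) ^ p.2)]
    have h1 : ‖(l ^ (p.1.1 + p.1.2)) ^ p.2‖ ≤ 1 := by
      rw [norm_pow, norm_pow]
      exact pow_le_one₀ (by positivity) (pow_le_one₀ (norm_nonneg _) hl.le)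
    exact mul_le_mul_of_nonneg_left (mul_le_of_le_one_right (norm_nonneg _) h1) (by positivity)
  have hterm : ∀ n m : ℕ, ∑' k : ℕ, (a n * (t * x) ^ n) * (b m * (s * x) ^ m) *
        (y / x * l ^ (n + m)) ^ k =
      a n * b m * (x ^ (n + m + 1) / (x - l ^ (n + m) * y)) * t ^ n * s ^ m := by
    intro n m
    have h1 : ‖l ^ (n + m)‖ ≤ 1 := by
      rw [norm_pow]; exact pow_le_one₀ (norm_nonneg _) hl.le
    have h2 : ‖y / x * l ^ (n + m)‖ < 1 := by
      rw [norm_mul]; exact lt_of_le_of_lt (mul_le_of_le_one_right (norm_nonneg _) h1) hq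
    have h3 : x - l ^ (n + m) * y ≠ 0 := by
      intro h
      have h4 : y / x * l ^ (n + m) = 1 := by
        rw [div_mul_eq_mul_div, div_eq_one_iff_eq hx]
        linear_combination -h
      rw [h4] at h2
      simp at h2
    rw [tsum_mul_left, tsum_geometric_of_norm_lt_one h2]
    have h5 : 1 - y / x * l ^ (n + m) = (x - l ^ (n + m) * y) / x := by
      field_simp
    rw [h5, inv_div, mul_pow, mul_pow, pow_succ, pow_add]
    ring
  have hS : Summable (fun p : ℕ × ℕ =>
      a p.1 * b p.2 * (x ^ (p.1 + p.2 + 1) / (x - l ^ (p.1 + p.2) * y)) *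
        t ^ p.1 * s ^ p.2) := by
    refine hF.prod.congr (fun p => ?_)
    first
      | exact hterm p.1 p.2
      | exact (hterm p.1 p.2).symm
  refine ⟨hS.norm, ?_⟩
  rw [← hS.tsum_prod (f := fun p : ℕ × ℕ =>
      a p.1 * b p.2 * (x ^ (p.1 + p.2 + 1) / (x - l ^ (p.1 + p.2) * y)) *
        t ^ p.1 * s ^ p.2)]
  rw [← tsum_congr (fun p : ℕ × ℕ => hterm p.1 p.2)]
  rw [← Summable.tsum_comm (f := fun (p : ℕ × ℕ) (k : ℕ) =>
      (a p.1 * (t * x) ^ p.1) * (b p.2 * (s * x) ^ p.2) *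
        (y / x * l ^ (p.1 + p.2)) ^ k) hF]
  refine tsum_congr (fun k => ?_)
  have hlk : ‖l ^ k‖ ≤ 1 := by
    rw [norm_pow]; exact pow_le_one₀ (norm_nonneg _) hl.le
  have hAk := ha (l ^ k * t * x) (by
    rw [mul_assoc, norm_mul]
    exact lt_of_le_of_lt (mul_le_of_le_one_left (norm_nonneg _) hlk) htx)
  have hBk := hb (l ^ k * s * x) (by
    rw [mul_assoc, norm_mul]
    exact lt_of_le_of_lt (mul_le_of_le_one_left (norm_nonneg _) hlk) hsx)
  rw [mul_assoc, tsum_mul_tsum_of_summable_norm hAk hBk, ← tsum_mul_left]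
  refine tsum_congr (fun p => ?_)
  have h6 : (l ^ (p.1 + p.2)) ^ k = (l ^ k) ^ p.1 * (l ^ k) ^ p.2 := by
    rw [← pow_add, ← pow_mul, ← pow_mul, mul_comm]
  rw [mul_pow (y / x), h6]
  simp only [mul_pow]
  ring
end

section
/- Let a : ℕ → ℂ and R > 0 be such that the power series ∑_{n=0}^∞ a_n u^n converges absolutely for |u| < R, with sum f(u). Let m ≥ 1, let λ₁,…,λ_m, x₁,…,x_m, y₁,…,y_m and z be complex numbers with |λ_i| < 1 and |y_i| < |x_i| for each i, and |x₁⋯x_m · z| < R. Then ∑_{n=0}^∞ a_n (∏_{i=1}^m x_i^{n+1}/(x_i − λ_i^n y_i)) z^n = ∑_{k₁,…,k_m ≥ 0} (∏_{i=1}^m (y_i/x_i)^{k_i}) · f(λ₁^{k₁}⋯λ_m^{k_m} x₁⋯x_m z), where the right-hand side is an absolutely convergent m-fold series (a sum over (k₁,…,k_m) ∈ ℕ^m). -/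
theorem geom_pi_aux (m : ℕ) (r : Fin m → ℂ) (hr : ∀ i, ‖r i‖ < 1) :
    Summable (fun k : Fin m → ℕ => ‖∏ i, r i ^ k i‖) ∧
    HasSum (fun k : Fin m → ℕ => ∏ i, r i ^ k i) (∏ i, (1 - r i)⁻¹) := by
  induction m with
  | zero =>
    refine ⟨Summable.of_finite, ?_⟩
    have h := hasSum_fintype (fun k : Fin 0 → ℕ => ∏ i, r i ^ k i)
    simpa using h
  | succ m ih =>
    obtain ⟨h1, h2⟩ := ih (fun i => r i.succ) (fun i => hr i.succ)
    have g1 : Summable (fun n : ℕ => ‖r 0 ^ n‖) := by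
      simpa [norm_pow] using summable_geometric_of_lt_one (norm_nonneg _) (hr 0)
    have g2 : HasSum (fun n : ℕ => r 0 ^ n) (1 - r 0)⁻¹ := hasSum_geometric_of_norm_lt_one (hr 0)
    have s1 := g1.mul_norm h1
    have s2 := g2.mul h2 s1.of_norm
    have e : ∀ p : ℕ × (Fin m → ℕ),
        (∏ i, r i ^ (Fin.consEquiv (fun _ => ℕ) p) i) = r 0 ^ p.1 * ∏ i, r i.succ ^ p.2 i := by
      intro p
      simp [Fin.prod_univ_succ, Fin.consEquiv]
    constructor
    · rw [← (Fin.consEquiv (fun _ : Fin (m + 1) => ℕ)).summable_iff]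
      refine s1.congr fun p => ?_
      simp only [Function.comp_apply, e]
    · rw [← (Fin.consEquiv (fun _ : Fin (m + 1) => ℕ)).hasSum_iff, Fin.prod_univ_succ]
      have e2 : (fun k : Fin (m + 1) → ℕ => ∏ i, r i ^ k i) ∘ (Fin.consEquiv (fun _ => ℕ))
          = fun p : ℕ × (Fin m → ℕ) => r 0 ^ p.1 * ∏ i, r i.succ ^ p.2 i := funext e
      rw [e2]
      exact s2

/-- The multivariate generalized Lambert series identity. -/
theorem multivariate_generalized_lambert (a : ℕ → ℂ) (R : ℝ) (hR : 0 < R)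
    (ha : ∀ u : ℂ, ‖u‖ < R → Summable (fun n : ℕ => ‖a n * u ^ n‖))
    (m : ℕ) (hm : 1 ≤ m) (l x y : Fin m → ℂ) (z : ℂ)
    (hl : ∀ i, ‖l i‖ < 1) (hyx : ∀ i, ‖y i‖ < ‖x i‖)
    (hxz : ‖(∏ i, x i) * z‖ < R) :
    Summable (fun k : Fin m → ℕ =>
      ‖(∏ i, (y i / x i) ^ k i) *
        ∑' j : ℕ, a j * ((∏ i, l i ^ k i) * (∏ i, x i) * z) ^ j‖) ∧
    ∑' n : ℕ, a n * (∏ i, x i ^ (n + 1) / (x i - l i ^ n * y i)) * z ^ n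
      = ∑' k : Fin m → ℕ, (∏ i, (y i / x i) ^ k i) *
          ∑' j : ℕ, a j * ((∏ i, l i ^ k i) * (∏ i, x i) * z) ^ j := by
  have hx : ∀ i, x i ≠ 0 := fun i => norm_pos_iff.mp ((norm_nonneg _).trans_lt (hyx i))
  have hr : ∀ i, ‖y i / x i‖ < 1 := fun i => by
    rw [norm_div, div_lt_one (norm_pos_iff.mpr (hx i))]; exact hyx i
  have hln : ∀ n i, ‖l i ^ n‖ ≤ 1 := fun n i => by
    rw [norm_pow]; exact pow_le_one₀ (norm_nonneg _) (hl i).le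
  have hrn : ∀ n i, ‖l i ^ n * (y i / x i)‖ < 1 := fun n i => by
    rw [norm_mul]
    exact (mul_le_of_le_one_left (norm_nonneg _) (hln n i)).trans_lt (hr i)
  have hprod : ∀ k : Fin m → ℕ, ‖∏ i, l i ^ k i‖ ≤ 1 := fun k => by
    rw [norm_prod]
    exact Finset.prod_le_one (fun i _ => norm_nonneg _) (fun i _ => hln _ i)
  let F : (Fin m → ℕ) × ℕ → ℂ := fun p =>
    (∏ i, (y i / x i) ^ p.1 i) * (a p.2 * ((∏ i, l i ^ p.1 i) * (∏ i, x i) * z) ^ p.2)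
  have hF : Summable (fun p => ‖F p‖) := by
    refine Summable.of_nonneg_of_le (fun _ => norm_nonneg _) (fun p => ?_)
      ((geom_pi_aux m _ hr).1.mul_norm (ha _ hxz))
    have h : F p = (∏ i, l i ^ p.1 i) ^ p.2 *
        ((∏ i, (y i / x i) ^ p.1 i) * (a p.2 * ((∏ i, x i) * z) ^ p.2)) := by
      simp only [F, mul_pow]; ring
    rw [h, norm_mul, norm_pow]
    exact mul_le_of_le_one_left (norm_nonneg _) (pow_le_one₀ (norm_nonneg _) (hprod _))
  have hin : ∀ k : Fin m → ℕ, ∑' j, F (k, j) = (∏ i, (y i / x i) ^ k i) *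
          ∑' j : ℕ, a j * ((∏ i, l i ^ k i) * (∏ i, x i) * z) ^ j := fun k => by
    simp only [F]
    rw [tsum_mul_left]
  constructor
  · refine Summable.of_nonneg_of_le (fun _ => norm_nonneg _) (fun k => ?_) hF.prod
    rw [← hin]
    exact norm_tsum_le_tsum_norm (hF.prod_factor k)
  · simp_rw [← hin]
    rw [← Summable.tsum_comm (f := fun k j => F (k, j)) hF.of_norm]
    refine tsum_congr fun n => ?_
    have h : ∀ k : Fin m → ℕ, F (k, n) =
        (a n * ((∏ i, x i) * z) ^ n) * ∏ i, (l i ^ n * (y i / x i)) ^ k i := fun k => by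
      have : ∏ i, (l i ^ n * (y i / x i)) ^ k i
          = (∏ i, l i ^ k i) ^ n * ∏ i, (y i / x i) ^ k i := by
        rw [← Finset.prod_pow, ← Finset.prod_mul_distrib]
        refine Finset.prod_congr rfl fun i _ => ?_
        rw [mul_pow, ← pow_mul, ← pow_mul, mul_comm n]
      rw [this]
      simp only [F, mul_pow]; ring
    simp_rw [h]
    rw [tsum_mul_left, (geom_pi_aux m _ (hrn n)).2.tsum_eq]
    have h3 : ∏ i, x i ^ (n + 1) / (x i - l i ^ n * y i)
        = (∏ i, x i) ^ n * ∏ i, (1 - l i ^ n * (y i / x i))⁻¹ := by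
      rw [← Finset.prod_pow, ← Finset.prod_mul_distrib]
      refine Finset.prod_congr rfl fun i _ => ?_
      have h4 : x i - l i ^ n * y i = x i * (1 - l i ^ n * (y i / x i)) := by
        have := hx i
        field_simp
      rw [h4, pow_succ, mul_comm (x i), mul_div_mul_right _ _ (hx i), div_eq_mul_inv]
    rw [h3, mul_pow]; ring
end

section
/- Let a : ℕ → ℂ and R > 0 be such that the power series ∑_{n=0}^∞ a_n u^n converges absolutely for |u| < R, with sum f(u). Let m ≥ 1 and let λ, x, y, z be complex numbers with |λ| < 1, |y| < |x|, and |x^m · z| < R. Then ∑_{n=0}^∞ a_n (x^{n+1}/(x − λ^n y))^m z^n = ∑_{(k₁,…,k_m) ∈ ℕ^m} (y/x)^{k₁+⋯+k_m} f(λ^{k₁+⋯+k_m} x^m z), where the right-hand side is an absolutely convergent sum over ℕ^m. -/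
theorem geom_multi (q : ℂ) (hq : ‖q‖ < 1) (m : ℕ) :
    Summable (fun k : Fin m → ℕ => ‖q ^ (∑ i, k i)‖) ∧
    ∑' k : Fin m → ℕ, q ^ (∑ i, k i) = ((1 - q)⁻¹) ^ m := by
  induction m with
  | zero =>
    refine ⟨Summable.of_finite, ?_⟩
    simp
  | succ m ih =>
    obtain ⟨h1, h2⟩ := ih
    have hg : Summable (fun n : ℕ => ‖q ^ n‖) := by
      simpa [norm_pow] using summable_geometric_of_lt_one (norm_nonneg q) hq
    have e : ∀ p : ℕ × (Fin m → ℕ), q ^ (∑ i, (Fin.consEquiv (fun _ : Fin (m+1) => ℕ)) p i)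
        = q ^ p.1 * q ^ (∑ i, p.2 i) := by
      intro p
      simp [Fin.consEquiv, Fin.sum_univ_succ, pow_add]
    constructor
    · rw [← (Fin.consEquiv (fun _ : Fin (m+1) => ℕ)).summable_iff]
      refine (hg.mul_norm h1).congr ?_
      intro p
      simp only [Function.comp]
      rw [e]
    · rw [← (Fin.consEquiv (fun _ : Fin (m+1) => ℕ)).tsum_eq, tsum_congr e,
        ← tsum_mul_tsum_of_summable_norm hg h1, h2, tsum_geometric_of_norm_lt_one hq, pow_succ']


/-- Power specialization of the multivariate generalized Lambert series. -/
theorem multivariate_generalized_lambert_power (a : ℕ → ℂ) (R : ℝ) (hR : 0 < R)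
    (ha : ∀ u : ℂ, ‖u‖ < R → Summable (fun n : ℕ => ‖a n * u ^ n‖))
    (m : ℕ) (hm : 1 ≤ m) (l x y z : ℂ)
    (hl : ‖l‖ < 1) (hyx : ‖y‖ < ‖x‖) (hxz : ‖x ^ m * z‖ < R) :
    Summable (fun k : Fin m → ℕ =>
      ‖(y / x) ^ (∑ i, k i) *
        ∑' j : ℕ, a j * (l ^ (∑ i, k i) * x ^ m * z) ^ j‖) ∧
    ∑' n : ℕ, a n * (x ^ (n + 1) / (x - l ^ n * y)) ^ m * z ^ n
      = ∑' k : Fin m → ℕ, (y / x) ^ (∑ i, k i) *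
          ∑' j : ℕ, a j * (l ^ (∑ i, k i) * x ^ m * z) ^ j := by
  have hx : x ≠ 0 := by
    rintro rfl
    simp at hyx
    exact absurd hyx (not_lt.mpr (norm_nonneg y))
  have hx' : 0 < ‖x‖ := norm_pos_iff.mpr hx
  have hq : ‖y / x‖ < 1 := by rw [norm_div, div_lt_one hx']; exact hyx
  have hG := (geom_multi (y / x) hq m).1
  have hA := ha _ hxz
  have hF : Summable (fun p : (Fin m → ℕ) × ℕ =>
      ‖(y / x) ^ (∑ i, p.1 i) * (a p.2 * (l ^ (∑ i, p.1 i) * x ^ m * z) ^ p.2)‖) := by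
    refine Summable.of_nonneg_of_le (fun _ => norm_nonneg _) ?_ (hG.mul_norm hA)
    rintro ⟨k, j⟩
    simp only [norm_mul]
    refine mul_le_mul_of_nonneg_left ?_ (norm_nonneg _)
    refine mul_le_mul_of_nonneg_left ?_ (norm_nonneg _)
    rw [norm_pow, norm_pow]
    refine pow_le_pow_left₀ (norm_nonneg _) ?_ _
    rw [mul_assoc, norm_mul, norm_pow]
    exact mul_le_of_le_one_left (norm_nonneg _) (pow_le_one₀ (norm_nonneg _) hl.le)
  constructor
  · have h1 := hF.prod
    refine Summable.of_nonneg_of_le (fun _ => norm_nonneg _) ?_ h1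
    intro k
    rw [← tsum_mul_left]
    exact norm_tsum_le_tsum_norm (hF.prod_factor k)
  · simp_rw [← tsum_mul_left]
    rw [← Summable.tsum_comm (f := fun (k : Fin m → ℕ) (j : ℕ) =>
      (y / x) ^ (∑ i, k i) * (a j * (l ^ (∑ i, k i) * x ^ m * z) ^ j)) hF.of_norm]
    refine tsum_congr fun j => ?_
    have hj : ‖l ^ j * (y / x)‖ < 1 := by
      rw [norm_mul, norm_pow]
      exact lt_of_le_of_lt (mul_le_of_le_one_left (norm_nonneg _)
        (pow_le_one₀ (norm_nonneg _) hl.le)) hq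
    have e : ∀ k : Fin m → ℕ, (y / x) ^ (∑ i, k i) * (a j * (l ^ (∑ i, k i) * x ^ m * z) ^ j)
        = (a j * (x ^ m * z) ^ j) * (l ^ j * (y / x)) ^ (∑ i, k i) := by
      intro k
      rw [mul_assoc (l ^ _), mul_pow (l ^ _) (x ^ m * z), mul_pow (l ^ j), ← pow_mul, ← pow_mul,
        mul_comm j]
      ring
    rw [tsum_congr e, tsum_mul_left, (geom_multi _ hj m).2]
    have e2 : x ^ (j + 1) / (x - l ^ j * y) = x ^ j * (1 - l ^ j * (y / x))⁻¹ := by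
      have : x - l ^ j * y = x * (1 - l ^ j * (y / x)) := by field_simp
      rw [this, pow_succ', mul_div_mul_left _ _ hx, div_eq_mul_inv]
    rw [e2, mul_pow, mul_pow, ← pow_mul, ← pow_mul, mul_comm j m]
    ring
end

section
/- Let λ, x, y, z be complex numbers with |λ| < 1, |y| < |x|, and |x·z| < 1. Then ∑_{n=0}^∞ x^{n+1}/(x − λ^n y) · z^n = ∑_{k=0}^∞ (y/x)^k / (1 − λ^k x z). -/
/-- Generalized Lambert series for the constant sequence `aₙ = 1`,
with generating function `f(u) = 1/(1−u)`. -/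
theorem generalized_lambert_geometric (l x y z : ℂ)
    (hl : ‖l‖ < 1) (hyx : ‖y‖ < ‖x‖) (hxz : ‖x * z‖ < 1) :
    ∑' n : ℕ, x ^ (n + 1) / (x - l ^ n * y) * z ^ n
      = ∑' k : ℕ, (y / x) ^ k / (1 - l ^ k * x * z) := by
  have hx0 : 0 < ‖x‖ := lt_of_le_of_lt (norm_nonneg y) hyx
  have hx : x ≠ 0 := norm_pos_iff.mp hx0
  have hq : ‖y / x‖ < 1 := by rw [norm_div]; exact (div_lt_one hx0).mpr hyx
  have hlp : ∀ n : ℕ, ‖l ^ n‖ ≤ 1 := fun n => by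
    rw [norm_pow]; exact pow_le_one₀ (norm_nonneg _) hl.le
  have hmul : ∀ (n : ℕ) (w : ℂ), ‖w‖ < 1 → ‖l ^ n * w‖ < 1 := fun n w hw => by
    rw [norm_mul]
    exact lt_of_le_of_lt (mul_le_of_le_one_left (norm_nonneg _) (hlp n)) hw
  have hS : Summable (Function.uncurry
      (fun n k : ℕ => (x * z) ^ n * (y / x) ^ k * l ^ (n * k))) := by
    have h := Summable.mul_of_nonneg
      (summable_geometric_of_lt_one (norm_nonneg _) hxz)
      (summable_geometric_of_lt_one (norm_nonneg _) hq)
      (fun n => pow_nonneg (norm_nonneg _) n) (fun n => pow_nonneg (norm_nonneg _) n)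
    refine Summable.of_norm_bounded h ?_
    rintro ⟨n, k⟩
    simp only [Function.uncurry]
    rw [norm_mul, norm_mul, norm_pow (x * z), norm_pow (y / x)]
    exact mul_le_of_le_one_right (by positivity) (hlp _)
  have hL : ∀ n : ℕ, x ^ (n + 1) / (x - l ^ n * y) * z ^ n
      = ∑' k : ℕ, (x * z) ^ n * (y / x) ^ k * l ^ (n * k) := fun n => by
    have hn := hmul n _ hq
    have hne : 1 - l ^ n * (y / x) ≠ 0 := by
      intro h
      rw [← sub_eq_zero.mp h] at hn
      simp at hn
    have e : x - l ^ n * y = x * (1 - l ^ n * (y / x)) := by field_simp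
    have : ∀ k : ℕ, (x * z) ^ n * (y / x) ^ k * l ^ (n * k)
        = (x * z) ^ n * (l ^ n * (y / x)) ^ k := fun k => by
      rw [mul_pow (l ^ n), pow_mul]; ring
    simp_rw [this]
    rw [tsum_mul_left, tsum_geometric_of_norm_lt_one hn, e, pow_succ, mul_pow]
    generalize 1 - l ^ n * (y / x) = d at hne ⊢
    field_simp
  have hR : ∀ k : ℕ, (y / x) ^ k / (1 - l ^ k * x * z)
      = ∑' n : ℕ, (x * z) ^ n * (y / x) ^ k * l ^ (n * k) := fun k => by
    have : ∀ n : ℕ, (x * z) ^ n * (y / x) ^ k * l ^ (n * k)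
        = (y / x) ^ k * (l ^ k * (x * z)) ^ n := fun n => by
      rw [mul_pow (l ^ k), mul_comm n k, pow_mul]; ring
    simp_rw [this]
    rw [tsum_mul_left, tsum_geometric_of_norm_lt_one (hmul k _ hxz), div_eq_mul_inv, mul_assoc (l ^ k)]
  simp_rw [hL, hR]
  exact hS.tsum_comm.symm
end

section
/- Let λ, x, y, z, w, t be complex numbers with |λ| < 1, |y| < |x|, |w| < |z|, and |t·x·z| < 1. Then ∑_{n=0}^∞ (−1)^n · x^{n+1}/(x − λ^n y) · z^{n+1}/(z − λ^n w) · t^n = ∑_{k=0}^∞ ∑_{n=0}^∞ (w/z)^k (y/x)^n · 1/(1 + λ^{k+n} t x z), where the right-hand side is an absolutely convergent double series. -/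
/-- Mehler-type generalized Lambert series for `aₙ = (−1)ⁿ`,
with generating function `f(u) = 1/(1+u)`. -/
theorem generalized_lambert_mehler_alternating (l x y z w t : ℂ)
    (hl : ‖l‖ < 1) (hyx : ‖y‖ < ‖x‖) (hwz : ‖w‖ < ‖z‖) (htxz : ‖t * x * z‖ < 1) :
    Summable (fun p : ℕ × ℕ =>
      ‖(w / z) ^ p.1 * (y / x) ^ p.2 * (1 / (1 + l ^ (p.1 + p.2) * t * x * z))‖) ∧
    ∑' n : ℕ, (-1 : ℂ) ^ n * (x ^ (n + 1) / (x - l ^ n * y)) *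
        (z ^ (n + 1) / (z - l ^ n * w)) * t ^ n
      = ∑' k : ℕ, ∑' n : ℕ, (w / z) ^ k * (y / x) ^ n *
          (1 / (1 + l ^ (k + n) * t * x * z)) := by
  have hx0 : 0 < ‖x‖ := lt_of_le_of_lt (norm_nonneg y) hyx
  have hz0 : 0 < ‖z‖ := lt_of_le_of_lt (norm_nonneg w) hwz
  have hx : x ≠ 0 := norm_pos_iff.mp hx0
  have hz : z ≠ 0 := norm_pos_iff.mp hz0
  obtain ⟨b, hb⟩ : ∃ b, b = y / x := ⟨_, rfl⟩
  obtain ⟨a, ha⟩ : ∃ a, a = w / z := ⟨_, rfl⟩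
  obtain ⟨c, hc⟩ : ∃ c, c = t * x * z := ⟨_, rfl⟩
  have hb1 : ‖b‖ < 1 := by rw [hb, norm_div]; exact (div_lt_one hx0).2 hyx
  have ha1 : ‖a‖ < 1 := by rw [ha, norm_div]; exact (div_lt_one hz0).2 hwz
  rw [← hc] at htxz
  have hy : y = b * x := by rw [hb]; field_simp
  have hw : w = a * z := by rw [ha]; field_simp
  have hlp : ∀ m : ℕ, ‖l ^ m‖ ≤ 1 := fun m => by
    rw [norm_pow]; exact pow_le_one₀ (norm_nonneg _) hl.le
  have hmul : ∀ (m : ℕ) (u : ℂ), ‖u‖ < 1 → ‖l ^ m * u‖ < 1 := fun m u hu => by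
    rw [norm_mul]
    exact lt_of_le_of_lt (mul_le_of_le_one_left (norm_nonneg _) (hlp m)) hu
  have hne : ∀ u : ℂ, ‖u‖ < 1 → 1 - u ≠ 0 := fun u hu h => by
    have : u = 1 := (sub_eq_zero.mp h).symm
    rw [this, norm_one] at hu
    exact lt_irrefl _ hu
  let F : (ℕ × ℕ) × ℕ → ℂ := fun q =>
    a ^ q.1.1 * b ^ q.1.2 * (-(l ^ (q.1.1 + q.1.2) * c)) ^ q.2
  have hF : Summable F := by
    have h1 : Summable (fun q : (ℕ × ℕ) × ℕ => (‖a‖ ^ q.1.1 * ‖b‖ ^ q.1.2) * ‖c‖ ^ q.2) :=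
      ((summable_geometric_of_lt_one (norm_nonneg a) ha1).mul_of_nonneg
        (summable_geometric_of_lt_one (norm_nonneg b) hb1)
        (fun _ => by positivity) (fun _ => by positivity)).mul_of_nonneg
        (summable_geometric_of_lt_one (norm_nonneg c) htxz)
        (fun _ => by positivity) (fun _ => by positivity)
    refine Summable.of_norm_bounded h1 fun q => ?_
    simp only [F]
    rw [norm_mul, norm_mul, norm_pow, norm_pow, norm_pow, norm_neg, norm_mul]
    gcongr
    exact mul_le_of_le_one_left (norm_nonneg _) (hlp _)
  have hin : ∀ p : ℕ × ℕ, ∑' m, F (p, m) =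
      (w / z) ^ p.1 * (y / x) ^ p.2 * (1 / (1 + l ^ (p.1 + p.2) * t * x * z)) := fun p => by
    simp only [F]
    rw [tsum_mul_left, tsum_geometric_of_norm_lt_one (by rw [norm_neg]; exact hmul _ _ htxz),
      ← ha, ← hb, hc, sub_neg_eq_add, one_div]
    simp only [mul_assoc]
  have hsum : Summable (fun p : ℕ × ℕ =>
      (w / z) ^ p.1 * (y / x) ^ p.2 * (1 / (1 + l ^ (p.1 + p.2) * t * x * z))) := by
    have := hF.prod
    simpa only [hin] using this
  refine ⟨hsum.norm, ?_⟩
  rw [← hsum.tsum_prod (f := fun p : ℕ × ℕ =>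
      (w / z) ^ p.1 * (y / x) ^ p.2 * (1 / (1 + l ^ (p.1 + p.2) * t * x * z)))]
  simp only [← hin]
  rw [← Summable.tsum_comm (f := fun p m => F (p, m)) hF]
  refine tsum_congr fun m => ?_
  have hA := hmul m a ha1
  have hB := hmul m b hb1
  have h2 : ∀ p : ℕ × ℕ, F (p, m) = (-c) ^ m * ((l ^ m * a) ^ p.1 * (l ^ m * b) ^ p.2) := by
    intro p
    simp only [F]
    rw [neg_pow (l ^ _ * c), neg_pow c]
    simp only [mul_pow, ← pow_mul, pow_add, mul_comm m]
    ring
  simp only [h2]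
  have h3 := tsum_mul_tsum_of_summable_norm (f := fun k : ℕ => (l ^ m * a) ^ k)
    (g := fun k : ℕ => (l ^ m * b) ^ k)
    (summable_norm_geometric_of_norm_lt_one hA) (summable_norm_geometric_of_norm_lt_one hB)
  rw [tsum_mul_left, ← h3, tsum_geometric_of_norm_lt_one hA, tsum_geometric_of_norm_lt_one hB]
  have e1 := hne _ hA
  have e2 := hne _ hB
  have e3 : x - l ^ m * y = x * (1 - l ^ m * b) := by rw [hy]; ring
  have e4 : z - l ^ m * w = z * (1 - l ^ m * a) := by rw [hw]; ring
  rw [e3, e4, hc, neg_pow (t * x * z), pow_succ, pow_succ, mul_pow, mul_pow]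
  field_simp
end

section
/- Let λ, x, y, t, s be complex numbers with |λ| < 1, |y| < |x|, |t·x| < 1, and |s·x| < 1. Then ∑_{n=0}^∞ ∑_{m=0}^∞ x^{n+m+1}/(x − λ^{n+m} y) · t^n s^m = ∑_{k=0}^∞ (y/x)^k / ((1 − λ^k t x)(1 − λ^k s x)), where the left-hand side is an absolutely convergent double series. -/
/-- Rogers-type generalized Lambert series for the constant sequences `aₙ = bₘ = 1`. -/
theorem generalized_lambert_rogers_geometric (l x y t s : ℂ)
    (hl : ‖l‖ < 1) (hyx : ‖y‖ < ‖x‖) (htx : ‖t * x‖ < 1) (hsx : ‖s * x‖ < 1) :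
    Summable (fun p : ℕ × ℕ =>
      ‖x ^ (p.1 + p.2 + 1) / (x - l ^ (p.1 + p.2) * y) * t ^ p.1 * s ^ p.2‖) ∧
    ∑' n : ℕ, ∑' m : ℕ, x ^ (n + m + 1) / (x - l ^ (n + m) * y) * t ^ n * s ^ m
      = ∑' k : ℕ, (y / x) ^ k / ((1 - l ^ k * t * x) * (1 - l ^ k * s * x)) := by
  have hx0 : 0 < ‖x‖ := lt_of_le_of_lt (norm_nonneg y) hyx
  have hx : x ≠ 0 := norm_pos_iff.mp hx0
  have hq : ‖y / x‖ < 1 := by rw [norm_div, div_lt_one hx0]; exact hyx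
  have hlk : ∀ k : ℕ, ‖l ^ k‖ ≤ 1 := fun k => by
    rw [norm_pow]; exact pow_le_one₀ (norm_nonneg _) hl.le
  have hsmall : ∀ (k : ℕ) (z : ℂ), ‖z‖ < 1 → ‖l ^ k * z‖ < 1 := fun k z hz => by
    rw [norm_mul]
    exact lt_of_le_of_lt (mul_le_of_le_one_left (norm_nonneg _) (hlk k)) hz
  let F : (ℕ × ℕ) × ℕ → ℂ := fun p =>
    (t * x) ^ p.1.1 * (s * x) ^ p.1.2 * (l ^ (p.1.1 + p.1.2) * (y / x)) ^ p.2
  have hgeo : ∀ z : ℂ, ‖z‖ < 1 → Summable (fun n : ℕ => ‖z‖ ^ n) := fun z hz =>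
    summable_geometric_of_lt_one (norm_nonneg _) hz
  have hF : Summable F := by
    have h1 : Summable (fun p : ℕ × ℕ => ‖t * x‖ ^ p.1 * ‖s * x‖ ^ p.2) :=
      (hgeo _ htx).mul_of_nonneg (hgeo _ hsx) (fun _ => by positivity) (fun _ => by positivity)
    have h2 : Summable (fun p : (ℕ × ℕ) × ℕ =>
        (‖t * x‖ ^ p.1.1 * ‖s * x‖ ^ p.1.2) * ‖y / x‖ ^ p.2) :=
      h1.mul_of_nonneg (hgeo _ hq) (fun _ => by positivity) (fun _ => by positivity)
    refine Summable.of_norm_bounded h2 fun p => ?_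
    simp only [F]
    rw [norm_mul, norm_mul, norm_pow (t * x), norm_pow (s * x), norm_pow (_ * (y / x))]
    refine mul_le_mul_of_nonneg_left (pow_le_pow_left₀ (norm_nonneg _) ?_ _) (by positivity)
    rw [norm_mul]
    exact mul_le_of_le_one_left (norm_nonneg _) (hlk _)
  have hk : ∀ p : ℕ × ℕ, ∑' k, F (p, k) =
      x ^ (p.1 + p.2 + 1) / (x - l ^ (p.1 + p.2) * y) * t ^ p.1 * s ^ p.2 := fun p => by
    have hz := hsmall (p.1 + p.2) _ hq
    have hne : 1 - l ^ (p.1 + p.2) * (y / x) ≠ 0 := fun h => by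
      rw [← sub_eq_zero.mp h] at hz; simp at hz
    have he : x - l ^ (p.1 + p.2) * y = x * (1 - l ^ (p.1 + p.2) * (y / x)) := by
      field_simp
    simp only [F]
    rw [tsum_mul_left, tsum_geometric_of_norm_lt_one hz, he]
    generalize 1 - l ^ (p.1 + p.2) * (y / x) = w at hne
    field_simp
    ring
  have hp : ∀ k : ℕ, ∑' p, F (p, k) =
      (y / x) ^ k / ((1 - l ^ k * t * x) * (1 - l ^ k * s * x)) := fun k => by
    have ha := hsmall k _ htx
    have hb := hsmall k _ hsx
    have e : ∀ p : ℕ × ℕ, F (p, k) =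
        (y / x) ^ k * ((l ^ k * (t * x)) ^ p.1 * (l ^ k * (s * x)) ^ p.2) := fun p => by
      simp only [F]
      rw [mul_pow (l ^ _) (y / x), mul_pow (l ^ k), mul_pow (l ^ k), ← pow_mul, ← pow_mul,
        ← pow_mul, add_mul, pow_add, mul_comm p.1 k, mul_comm p.2 k]
      ring
    simp_rw [e]
    rw [tsum_mul_left, ← tsum_mul_tsum_of_summable_norm
      (by simpa only [norm_pow] using hgeo _ ha) (by simpa only [norm_pow] using hgeo _ hb),
      tsum_geometric_of_norm_lt_one ha, tsum_geometric_of_norm_lt_one hb, div_eq_mul_inv (_ ^ k), mul_inv,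
      mul_assoc (l ^ k) t x, mul_assoc (l ^ k) s x]
  have hS := hF.prod
  simp only [hk] at hS
  refine ⟨hS.norm, ?_⟩
  rw [← hS.tsum_prod (f := fun p : ℕ × ℕ =>
    x ^ (p.1 + p.2 + 1) / (x - l ^ (p.1 + p.2) * y) * t ^ p.1 * s ^ p.2)]
  simp_rw [← hk, ← hp]
  exact (Summable.tsum_comm (f := fun p k => F (p, k)) hF).symm
end

section
/- Let λ, x, y, z be complex numbers with 0 < |λ| < 1, |y| < |x|, 0 < |x·z| < 1. Then ∑_{n=0}^∞ (1/(n+1)) · x^{n+1}/(x − λ^n y) · z^n = −∑_{k=0}^∞ (y/(λx))^k · log(1 − λ^k x z)/(x z), where log denotes the principal branch of the complex logarithm. -/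
/-- Generalized Lambert series for `aₙ = 1/(n+1)`, with generating function
`f(u) = −log(1−u)/u` (principal complex logarithm). -/
theorem generalized_lambert_log (l x y z : ℂ)
    (hl0 : 0 < ‖l‖) (hl : ‖l‖ < 1) (hyx : ‖y‖ < ‖x‖)
    (hxz0 : 0 < ‖x * z‖) (hxz : ‖x * z‖ < 1) :
    ∑' n : ℕ, (1 / (n + 1 : ℂ)) * (x ^ (n + 1) / (x - l ^ n * y)) * z ^ n
      = -∑' k : ℕ, (y / (l * x)) ^ k *
          (Complex.log (1 - l ^ k * x * z) / (x * z)) := by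
  have hl' : l ≠ 0 := norm_pos_iff.mp hl0
  have hxz' : x * z ≠ 0 := norm_pos_iff.mp hxz0
  have hx : x ≠ 0 := left_ne_zero_of_mul hxz'
  have hz : z ≠ 0 := right_ne_zero_of_mul hxz'
  have hx0 : 0 < ‖x‖ := norm_pos_iff.mpr hx
  have hq : ‖y / x‖ < 1 := by
    rw [norm_div, div_lt_one hx0]; exact hyx
  have hlp : ∀ k : ℕ, ‖l ^ k‖ ≤ 1 := fun k => by
    rw [norm_pow]; exact pow_le_one₀ (norm_nonneg _) hl.le
  have hsum : Summable (fun p : ℕ × ℕ =>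
      (1 / (p.1 + 1 : ℂ)) * (x * z) ^ p.1 * (l ^ p.1 * (y / x)) ^ p.2) := by
    have h1 : Summable (fun n : ℕ => ‖x * z‖ ^ n) :=
      summable_geometric_of_lt_one (norm_nonneg _) hxz
    have h2 : Summable (fun n : ℕ => ‖y / x‖ ^ n) :=
      summable_geometric_of_lt_one (norm_nonneg _) hq
    have h3 := h1.mul_of_nonneg h2 (fun n => by positivity) (fun n => by positivity)
    refine Summable.of_norm_bounded h3 ?_
    rintro ⟨n, k⟩
    have ha : ‖(1 / (n + 1 : ℂ))‖ ≤ 1 := by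
      have : ‖(n + 1 : ℂ)‖ = n + 1 := by
        have := Complex.norm_natCast (n + 1)
        push_cast at this
        exact this
      rw [norm_div, this, norm_one]
      apply div_le_one_of_le₀ <;> linarith [(Nat.cast_nonneg n : (0 : ℝ) ≤ n)]
    have hb : ‖(l ^ n * (y / x)) ^ k‖ ≤ ‖y / x‖ ^ k := by
      rw [norm_pow, norm_mul]
      exact pow_le_pow_left₀ (by positivity)
        (mul_le_of_le_one_left (norm_nonneg _) (hlp n)) k
    show ‖(1 / (n + 1 : ℂ)) * (x * z) ^ n * (l ^ n * (y / x)) ^ k‖ ≤ ‖x * z‖ ^ n * ‖y / x‖ ^ k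
    rw [norm_mul, norm_mul, norm_pow (x * z)]
    exact mul_le_mul (mul_le_of_le_one_left (by positivity) ha) hb (by positivity) (by positivity)
  have hL : ∀ n : ℕ, (1 / (n + 1 : ℂ)) * (x ^ (n + 1) / (x - l ^ n * y)) * z ^ n
      = ∑' k : ℕ, (1 / (n + 1 : ℂ)) * (x * z) ^ n * (l ^ n * (y / x)) ^ k := by
    intro n
    have hlt : ‖l ^ n * (y / x)‖ < 1 := by
      rw [norm_mul]
      exact lt_of_le_of_lt (mul_le_of_le_one_left (norm_nonneg _) (hlp n)) hq
    rw [tsum_mul_left, tsum_geometric_of_norm_lt_one hlt]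
    have e : (1 - l ^ n * (y / x)) = (x - l ^ n * y) / x := by field_simp
    rw [e, inv_div, mul_pow]
    ring
  have hR : ∀ k : ℕ, ∑' n : ℕ, (1 / (n + 1 : ℂ)) * (x * z) ^ n * (l ^ n * (y / x)) ^ k
      = -((y / (l * x)) ^ k * (Complex.log (1 - l ^ k * x * z) / (x * z))) := by
    intro k
    have hlt : ‖l ^ k * x * z‖ < 1 := by
      rw [mul_assoc, norm_mul]
      exact lt_of_le_of_lt (mul_le_of_le_one_left (norm_nonneg _) (hlp k)) hxz
    have h := Complex.hasSum_taylorSeries_neg_log hlt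
    have h' := (hasSum_nat_add_iff' 1).mpr h
    have h2 := h'.mul_left ((y / (l * x)) ^ k / (x * z))
    have h3 := h2.tsum_eq
    simp only [Finset.sum_range_one, pow_zero, Nat.cast_zero, div_zero, sub_zero] at h3
    have e : -((y / (l * x)) ^ k * (Complex.log (1 - l ^ k * x * z) / (x * z)))
      = (y / (l * x)) ^ k / (x * z) * -Complex.log (1 - l ^ k * x * z) := by ring
    rw [e, ← h3]
    refine tsum_congr fun n => ?_
    have hn : (n + 1 : ℂ) ≠ 0 := Nat.cast_add_one_ne_zero n
    push_cast
    have e1 : (l ^ k * x * z) ^ (n + 1) = l ^ k * (l ^ n) ^ k * ((x * z) ^ n * (x * z)) := by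
      rw [mul_assoc, mul_pow, pow_succ (x * z), pow_succ (l ^ k), ← pow_mul, ← pow_mul,
        mul_comm k n]
      ring
    rw [e1, mul_pow (l ^ n), div_pow, div_pow, mul_pow l x]
    field_simp
  rw [tsum_congr hL, ← tsum_neg, ← tsum_congr hR]
  exact (Summable.tsum_comm (f := fun n k : ℕ =>
    (1 / (n + 1 : ℂ)) * (x * z) ^ n * (l ^ n * (y / x)) ^ k) hsum).symm
end

section
/- Let λ, x, y, t, s be complex numbers with 0 < |λ| < 1, |y| < |x|, 0 < |t·x| < 1, and 0 < |s·x| < 1. Then ∑_{n=0}^∞ ∑_{m=0}^∞ (1/((n+1)(m+1))) · x^{n+m+1}/(x − λ^{n+m} y) · t^n s^m = ∑_{k=0}^∞ (y/(λ² x))^k · log(1 − λ^k t x) · log(1 − λ^k s x)/(t s x²), where log denotes the principal branch of the complex logarithm and the left-hand side is an absolutely convergent double series. -/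
lemma aux_log (z : ℂ) (hz0 : z ≠ 0) (hz : ‖z‖ < 1) :
    HasSum (fun n : ℕ => z ^ n / (n + 1 : ℂ)) (-Complex.log (1 - z) / z) := by
  have h := Complex.hasSum_taylorSeries_neg_log hz
  rw [← hasSum_nat_add_iff' 1] at h
  simp only [Finset.range_one, Finset.sum_singleton, Nat.cast_zero, div_zero, sub_zero] at h
  have h2 := h.div_const z
  have e : (fun n : ℕ => z ^ n / (n + 1 : ℂ)) =
      fun n : ℕ => z ^ (n + 1) / ((n + 1 : ℕ) : ℂ) / z := by
    funext n
    push_cast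
    rw [pow_succ]
    field_simp
  rw [e]
  exact h2

lemma aux_bound (z : ℂ) (n : ℕ) : ‖z ^ n / (n + 1 : ℂ)‖ ≤ ‖z‖ ^ n := by
  rw [norm_div, norm_pow]
  apply div_le_self (by positivity)
  have : ‖(n + 1 : ℂ)‖ = n + 1 := by
    have := Complex.norm_natCast (n + 1)
    push_cast at this
    exact this
  rw [this]
  have : (0 : ℝ) ≤ n := by positivity
  linarith

lemma aux_norm (z : ℂ) (hz : ‖z‖ < 1) : Summable (fun n : ℕ => ‖z ^ n / (n + 1 : ℂ)‖) :=
  Summable.of_nonneg_of_le (fun _ => norm_nonneg _) (aux_bound z)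
    (summable_geometric_of_lt_one (norm_nonneg _) hz)

/-- Rogers-type generalized Lambert series for `aₙ = 1/(n+1)`, `bₘ = 1/(m+1)`,
with generating functions `−log(1−u)/u` (principal complex logarithm). -/
theorem generalized_lambert_rogers_log (l x y t s : ℂ)
    (hl0 : 0 < ‖l‖) (hl : ‖l‖ < 1) (hyx : ‖y‖ < ‖x‖)
    (htx0 : 0 < ‖t * x‖) (htx : ‖t * x‖ < 1)
    (hsx0 : 0 < ‖s * x‖) (hsx : ‖s * x‖ < 1) :
    Summable (fun p : ℕ × ℕ =>
      ‖(1 / ((p.1 + 1 : ℂ) * (p.2 + 1 : ℂ))) *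
        (x ^ (p.1 + p.2 + 1) / (x - l ^ (p.1 + p.2) * y)) * t ^ p.1 * s ^ p.2‖) ∧
    ∑' n : ℕ, ∑' m : ℕ, (1 / ((n + 1 : ℂ) * (m + 1 : ℂ))) *
        (x ^ (n + m + 1) / (x - l ^ (n + m) * y)) * t ^ n * s ^ m
      = ∑' k : ℕ, (y / (l ^ 2 * x)) ^ k *
          (Complex.log (1 - l ^ k * t * x) * Complex.log (1 - l ^ k * s * x) /
            (t * s * x ^ 2)) := by
  have hx : x ≠ 0 := by rintro rfl; simp at htx0
  have ht : t ≠ 0 := by rintro rfl; simp at htx0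
  have hs : s ≠ 0 := by rintro rfl; simp at hsx0
  have hl1 : l ≠ 0 := norm_pos_iff.mp hl0
  have hq : ‖y / x‖ < 1 := by
    rw [norm_div]; exact (div_lt_one (norm_pos_iff.mpr hx)).mpr hyx
  have hlk : ∀ k : ℕ, ‖l ^ k‖ ≤ 1 := fun k => by
    rw [norm_pow]; exact pow_le_one₀ (norm_nonneg _) hl.le
  have hkz : ∀ (k : ℕ) (z : ℂ), ‖l ^ k * z‖ ≤ ‖z‖ := fun k z => by
    rw [norm_mul]; exact mul_le_of_le_one_left (norm_nonneg _) (hlk k)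
  set F : ℕ → ℕ × ℕ → ℂ := fun k p => (y / x) ^ k *
    (((l ^ k * (t * x)) ^ p.1 / (p.1 + 1 : ℂ)) * ((l ^ k * (s * x)) ^ p.2 / (p.2 + 1 : ℂ))) with hF
  have hFs : Summable (Function.uncurry F) := by
    have h1 := summable_geometric_of_lt_one (norm_nonneg _) hq
    have h2 := summable_geometric_of_lt_one (norm_nonneg _) htx
    have h3 := summable_geometric_of_lt_one (norm_nonneg _) hsx
    have h4 := h1.mul_of_nonneg (h2.mul_of_nonneg h3 (fun _ => by positivity)
      (fun _ => by positivity)) (fun _ => by positivity)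
      (fun _ => by simp only [Pi.zero_apply]; positivity)
    refine Summable.of_norm_bounded h4 ?_
    rintro ⟨k, n, m⟩
    simp only [Function.uncurry, hF]
    rw [norm_mul, norm_mul, norm_pow]
    have a1 := (aux_bound (l ^ k * (t * x)) n).trans
      (pow_le_pow_left₀ (norm_nonneg _) (hkz k (t * x)) n)
    have a2 := (aux_bound (l ^ k * (s * x)) m).trans
      (pow_le_pow_left₀ (norm_nonneg _) (hkz k (s * x)) m)
    gcongr
  have hG : ∀ p : ℕ × ℕ, ∑' k, F k p = (1 / ((p.1 + 1 : ℂ) * (p.2 + 1 : ℂ))) *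
        (x ^ (p.1 + p.2 + 1) / (x - l ^ (p.1 + p.2) * y)) * t ^ p.1 * s ^ p.2 := by
    rintro ⟨n, m⟩
    have hr : ‖l ^ (n + m) * (y / x)‖ < 1 := (hkz _ _).trans_lt hq
    have h := (hasSum_geometric_of_norm_lt_one hr).mul_left
      (((t * x) ^ n / (n + 1 : ℂ)) * ((s * x) ^ m / (m + 1 : ℂ)))
    have e : (fun k => F k (n, m)) = fun k => (((t * x) ^ n / (n + 1 : ℂ)) *
        ((s * x) ^ m / (m + 1 : ℂ))) * (l ^ (n + m) * (y / x)) ^ k := by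
      funext k
      simp only [hF, mul_pow, pow_add, ← pow_mul]
      rw [mul_comm n k, mul_comm m k]
      ring
    rw [e, h.tsum_eq]
    have e2 : 1 - l ^ (n + m) * (y / x) = (x - l ^ (n + m) * y) / x := by
      field_simp
    rw [e2, inv_div]
    simp only [mul_pow, pow_add, pow_one, mul_inv, div_eq_mul_inv]
    ring
  have hFs' : Summable (Function.uncurry fun p k => F k p) :=
    (Equiv.prodComm (ℕ × ℕ) ℕ).summable_iff.mpr hFs
  have hGs := hFs'.prod
  simp only [Function.uncurry, hG] at hGs
  refine ⟨hGs.norm, ?_⟩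
  rw [← hGs.tsum_prod]
  simp only [← hG]
  rw [hFs.tsum_comm]
  refine tsum_congr fun k => ?_
  have hlk0 : l ^ k ≠ 0 := pow_ne_zero _ hl1
  have ha := (hkz k (t * x)).trans_lt htx
  have hb := (hkz k (s * x)).trans_lt hsx
  simp only [hF]
  rw [tsum_mul_left, ← tsum_mul_tsum_of_summable_norm (aux_norm _ ha) (aux_norm _ hb),
    (aux_log _ (mul_ne_zero hlk0 (mul_ne_zero ht hx)) ha).tsum_eq,
    (aux_log _ (mul_ne_zero hlk0 (mul_ne_zero hs hx)) hb).tsum_eq]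
  rw [← mul_assoc (l ^ k) t x, ← mul_assoc (l ^ k) s x]
  generalize Complex.log (1 - l ^ k * t * x) = A
  generalize Complex.log (1 - l ^ k * s * x) = B
  rw [div_pow, div_pow, mul_pow, ← pow_mul, mul_comm 2 k, pow_mul]
  field_simp
end

section
/- Let λ, x, y, z be complex numbers with |λ| < 1 and |y| < |x|. Then ∑_{n=0}^∞ (1/n!) · x^{n+1}/(x − λ^n y) · z^n = ∑_{k=0}^∞ (y/x)^k · exp(λ^k x z), where exp is the complex exponential function. -/
/-- Generalized Lambert series for `aₙ = 1/n!`, with generating function `exp`. -/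
theorem generalized_lambert_exp (l x y z : ℂ)
    (hl : ‖l‖ < 1) (hyx : ‖y‖ < ‖x‖) :
    ∑' n : ℕ, (1 / (Nat.factorial n : ℂ)) * (x ^ (n + 1) / (x - l ^ n * y)) * z ^ n
      = ∑' k : ℕ, (y / x) ^ k * Complex.exp (l ^ k * x * z) := by
  have hx0 : 0 < ‖x‖ := lt_of_le_of_lt (norm_nonneg y) hyx
  have hx : x ≠ 0 := norm_pos_iff.mp hx0
  have hq : ‖y / x‖ < 1 := by
    rw [norm_div]
    exact (div_lt_one hx0).2 hyx
  have hln : ∀ n : ℕ, ‖l ^ n‖ ≤ 1 := fun n => by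
    rw [norm_pow]
    exact pow_le_one₀ (norm_nonneg _) hl.le
  have hr : ∀ n : ℕ, ‖l ^ n * (y / x)‖ ≤ ‖y / x‖ := fun n => by
    rw [norm_mul]
    exact mul_le_of_le_one_left (norm_nonneg _) (hln n)
  let F : ℕ → ℕ → ℂ := fun n k => (x * z) ^ n / (Nat.factorial n : ℂ) * (l ^ n * (y / x)) ^ k
  have hsum : Summable (Function.uncurry F) := by
    have h1 : Summable (fun n : ℕ => ‖x * z‖ ^ n / (Nat.factorial n : ℝ)) :=
      Real.summable_pow_div_factorial _
    have h2 : Summable (fun k : ℕ => ‖y / x‖ ^ k) :=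
      summable_geometric_of_lt_one (norm_nonneg _) hq
    have h3 := h1.mul_of_nonneg h2 (fun n => by positivity) (fun k => by positivity)
    refine Summable.of_norm_bounded h3 ?_
    rintro ⟨n, k⟩
    simp only [Function.uncurry, F]
    rw [norm_mul, norm_div, norm_pow, norm_pow (l ^ n * (y / x)), Complex.norm_natCast]
    exact mul_le_mul_of_nonneg_left (pow_le_pow_left₀ (norm_nonneg _) (hr n) k) (by positivity)
  have hL : ∀ n : ℕ, (1 / (Nat.factorial n : ℂ)) * (x ^ (n + 1) / (x - l ^ n * y)) * z ^ n
      = ∑' k, F n k := fun n => by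
    have hlt : ‖l ^ n * (y / x)‖ < 1 := (hr n).trans_lt hq
    simp only [F]
    rw [tsum_mul_left, tsum_geometric_of_norm_lt_one hlt]
    have e : 1 - l ^ n * (y / x) = (x - l ^ n * y) / x := by field_simp
    rw [e, inv_div, mul_pow, pow_succ]
    ring
  have hR : ∀ k : ℕ, (y / x) ^ k * Complex.exp (l ^ k * x * z) = ∑' n, F n k := fun k => by
    rw [Complex.exp_eq_exp_ℂ, NormedSpace.exp_eq_tsum_div, ← tsum_mul_left]
    refine tsum_congr fun n => ?_
    simp only [F, mul_pow, ← pow_mul, mul_comm n k]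
    ring
  rw [tsum_congr hL, tsum_congr hR]
  exact hsum.tsum_comm.symm
end

section
/- Let λ, x, y, z, w, t be complex numbers with |λ| < 1, |y| < |x|, and |w| < |z|. Then ∑_{n=0}^∞ (1/n!) · x^{n+1}/(x − λ^n y) · z^{n+1}/(z − λ^n w) · t^n = ∑_{k=0}^∞ ∑_{n=0}^∞ (w/z)^k (y/x)^n · exp(λ^{k+n} t x z), where exp is the complex exponential and the right-hand side is an absolutely convergent double series. -/
/-- Mehler-type generalized Lambert series for `aₙ = 1/n!`. -/
theorem generalized_lambert_mehler_exp (l x y z w t : ℂ)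
    (hl : ‖l‖ < 1) (hyx : ‖y‖ < ‖x‖) (hwz : ‖w‖ < ‖z‖) :
    Summable (fun p : ℕ × ℕ =>
      ‖(w / z) ^ p.1 * (y / x) ^ p.2 * Complex.exp (l ^ (p.1 + p.2) * t * x * z)‖) ∧
    ∑' n : ℕ, (1 / (Nat.factorial n : ℂ)) * (x ^ (n + 1) / (x - l ^ n * y)) *
        (z ^ (n + 1) / (z - l ^ n * w)) * t ^ n
      = ∑' k : ℕ, ∑' n : ℕ, (w / z) ^ k * (y / x) ^ n *
          Complex.exp (l ^ (k + n) * t * x * z) := by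
  have hx0 : 0 < ‖x‖ := (norm_nonneg y).trans_lt hyx
  have hz0 : 0 < ‖z‖ := (norm_nonneg w).trans_lt hwz
  have hx : x ≠ 0 := norm_pos_iff.mp hx0
  have hz : z ≠ 0 := norm_pos_iff.mp hz0
  obtain ⟨b, hb⟩ : ∃ b, b = y / x := ⟨_, rfl⟩
  obtain ⟨a, ha⟩ : ∃ a, a = w / z := ⟨_, rfl⟩
  have hb1 : ‖b‖ < 1 := by rw [hb, norm_div, div_lt_one hx0]; exact hyx
  have ha1 : ‖a‖ < 1 := by rw [ha, norm_div, div_lt_one hz0]; exact hwz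
  have hyb : y = b * x := by rw [hb]; field_simp
  have hwa : w = a * z := by rw [ha]; field_simp
  rw [← ha, ← hb]
  have hlp : ∀ n : ℕ, ‖l ^ n‖ ≤ 1 := fun n => by
    rw [norm_pow]; exact pow_le_one₀ (norm_nonneg _) hl.le
  have hab : Summable (fun p : ℕ × ℕ => ‖a‖ ^ p.1 * ‖b‖ ^ p.2) :=
    (summable_geometric_of_lt_one (norm_nonneg _) ha1).mul_of_nonneg
      (summable_geometric_of_lt_one (norm_nonneg _) hb1)
      (fun n => by positivity) (fun n => by positivity)
  have hS1 : Summable (fun p : ℕ × ℕ =>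
      ‖a ^ p.1 * b ^ p.2 * Complex.exp (l ^ (p.1 + p.2) * t * x * z)‖) := by
    refine Summable.of_nonneg_of_le (fun _ => norm_nonneg _) (fun p => ?_)
      (hab.mul_right (Real.exp ‖t * x * z‖))
    rw [norm_mul, norm_mul, norm_pow, norm_pow]
    refine mul_le_mul_of_nonneg_left ?_ (by positivity)
    refine (Complex.norm_exp_le_exp_norm _).trans (Real.exp_le_exp.mpr ?_)
    rw [show l ^ (p.1 + p.2) * t * x * z = l ^ (p.1 + p.2) * (t * x * z) by ring, norm_mul]
    exact mul_le_of_le_one_left (norm_nonneg _) (hlp _)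
  refine ⟨hS1, ?_⟩
  rw [← hS1.of_norm.tsum_prod (f := fun p : ℕ × ℕ =>
      a ^ p.1 * b ^ p.2 * Complex.exp (l ^ (p.1 + p.2) * t * x * z))]
  let F : ℕ → ℕ × ℕ → ℂ := fun m p =>
    a ^ p.1 * b ^ p.2 * ((l ^ (p.1 + p.2) * t * x * z) ^ m / (Nat.factorial m : ℂ))
  have hF : Summable (Function.uncurry F) := by
    have hB : Summable (fun q : ℕ × (ℕ × ℕ) =>
        (‖t * x * z‖ ^ q.1 / (Nat.factorial q.1 : ℝ)) * (‖a‖ ^ q.2.1 * ‖b‖ ^ q.2.2)) :=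
      (Real.summable_pow_div_factorial ‖t * x * z‖).mul_of_nonneg hab
        (fun n => by positivity) (fun n => by positivity)
    refine Summable.of_norm_bounded hB ?_
    rintro ⟨m, p⟩
    simp only [Function.uncurry, F]
    rw [show l ^ (p.1 + p.2) * t * x * z = l ^ (p.1 + p.2) * (t * x * z) by ring, norm_mul,
      norm_mul, norm_pow, norm_pow, norm_div, norm_pow, norm_mul, Complex.norm_natCast, mul_comm]
    refine mul_le_mul_of_nonneg_right ?_ (by positivity)
    have := mul_le_of_le_one_left (norm_nonneg (t * x * z)) (hlp (p.1 + p.2))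
    gcongr
  have e1 : ∀ p : ℕ × ℕ, a ^ p.1 * b ^ p.2 * Complex.exp (l ^ (p.1 + p.2) * t * x * z)
      = ∑' m, F m p := fun p => by
    simp only [F]
    rw [tsum_mul_left, Complex.exp_eq_exp_ℂ, NormedSpace.exp_eq_tsum_div]
  rw [tsum_congr e1, hF.tsum_comm]
  refine tsum_congr fun m => ?_
  have key : ∀ c : ℂ, ‖c‖ < 1 → ‖l ^ m * c‖ < 1 := fun c hc => by
    rw [norm_mul]
    exact (mul_le_of_le_one_left (norm_nonneg _) (hlp m)).trans_lt hc
  have ne : ∀ c : ℂ, ‖c‖ < 1 → 1 - l ^ m * c ≠ 0 := fun c hc h => by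
    have h1 := key c hc
    rw [← sub_eq_zero.mp h] at h1
    simp at h1
  have e2 : ∀ p : ℕ × ℕ, F m p = ((t * x * z) ^ m / (Nat.factorial m : ℂ)) *
      ((l ^ m * a) ^ p.1 * (l ^ m * b) ^ p.2) := fun p => by
    simp only [F]; ring
  have sn : ∀ c : ℂ, ‖c‖ < 1 → Summable fun n : ℕ => ‖(l ^ m * c) ^ n‖ := fun c hc => by
    simp_rw [norm_pow _ _]
    exact summable_norm_geometric_of_norm_lt_one (key c hc) |>.congr (fun n => by simp)
  rw [tsum_congr e2, tsum_mul_left, ← tsum_mul_tsum_of_summable_norm (sn a ha1) (sn b hb1),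
    tsum_geometric_of_norm_lt_one (key a ha1), tsum_geometric_of_norm_lt_one (key b hb1)]
  have na := ne a ha1
  have nb := ne b hb1
  have d1 : x ^ (m + 1) / (x - l ^ m * y) = x ^ m * (1 - l ^ m * b)⁻¹ := by
    rw [hyb, show x - l ^ m * (b * x) = (1 - l ^ m * b) * x by ring, pow_succ,
      mul_div_mul_right _ _ hx, div_eq_mul_inv]
  have d2 : z ^ (m + 1) / (z - l ^ m * w) = z ^ m * (1 - l ^ m * a)⁻¹ := by
    rw [hwa, show z - l ^ m * (a * z) = (1 - l ^ m * a) * z by ring, pow_succ,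
      mul_div_mul_right _ _ hz, div_eq_mul_inv]
  rw [d1, d2]
  ring
end

section
/- Let λ, x, y, t, s be complex numbers with |λ| < 1 and |y| < |x|. Then ∑_{n=0}^∞ ∑_{m=0}^∞ (1/(n! · m!)) · x^{n+m+1}/(x − λ^{n+m} y) · t^n s^m = ∑_{k=0}^∞ (y/x)^k · exp(λ^k (t + s) x), where exp is the complex exponential and the left-hand side is an absolutely convergent double series. -/
/-- Rogers-type generalized Lambert series for `aₙ = 1/n!`, `bₘ = 1/m!`. -/
theorem generalized_lambert_rogers_exp (l x y t s : ℂ)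
    (hl : ‖l‖ < 1) (hyx : ‖y‖ < ‖x‖) :
    Summable (fun p : ℕ × ℕ =>
      ‖(1 / ((Nat.factorial p.1 : ℂ) * (Nat.factorial p.2 : ℂ))) *
        (x ^ (p.1 + p.2 + 1) / (x - l ^ (p.1 + p.2) * y)) * t ^ p.1 * s ^ p.2‖) ∧
    ∑' n : ℕ, ∑' m : ℕ, (1 / ((Nat.factorial n : ℂ) * (Nat.factorial m : ℂ))) *
        (x ^ (n + m + 1) / (x - l ^ (n + m) * y)) * t ^ n * s ^ m
      = ∑' k : ℕ, (y / x) ^ k * Complex.exp (l ^ k * (t + s) * x) := by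
  have hx0 : 0 < ‖x‖ := lt_of_le_of_lt (norm_nonneg y) hyx
  have hx : x ≠ 0 := norm_pos_iff.mp hx0
  have hq : ‖y / x‖ < 1 := by
    rw [norm_div, div_lt_one hx0]; exact hyx
  have hexp : ∀ z : ℂ, Summable (fun n : ℕ => ‖z ^ n / (n.factorial : ℂ)‖) := fun z =>
    NormedSpace.norm_expSeries_div_summable z
  have hpair : ∀ z w : ℂ, Summable (fun p : ℕ × ℕ =>
      ‖(z ^ p.1 / (p.1.factorial : ℂ)) * (w ^ p.2 / (p.2.factorial : ℂ))‖) := fun z w =>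
    Summable.mul_norm (f := fun n : ℕ => z ^ n / (n.factorial : ℂ))
      (g := fun n : ℕ => w ^ n / (n.factorial : ℂ)) (hexp z) (hexp w)
  have hlq : ∀ N : ℕ, ‖l ^ N * (y / x)‖ < 1 := by
    intro N
    rw [norm_mul, norm_pow]
    calc ‖l‖ ^ N * ‖y / x‖ ≤ 1 * ‖y / x‖ := by
          gcongr
          exact pow_le_one₀ (norm_nonneg l) hl.le
      _ < 1 := by simpa using hq
  obtain ⟨F, hFd⟩ : ∃ F : (ℕ × ℕ) × ℕ → ℂ, ∀ r, F r =
    (((t * x) ^ r.1.1 / (r.1.1.factorial : ℂ)) * ((s * x) ^ r.1.2 / (r.1.2.factorial : ℂ))) *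
      (l ^ (r.1.1 + r.1.2) * (y / x)) ^ r.2 := ⟨_, fun _ => rfl⟩
  have hF : Summable F := by
    have hg : Summable (fun k : ℕ => ‖(y / x) ^ k‖) := by
      simpa only [norm_pow] using summable_geometric_of_lt_one (norm_nonneg (y / x)) hq
    refine Summable.of_norm_bounded (Summable.mul_norm
      (f := fun p : ℕ × ℕ => ((t * x) ^ p.1 / (p.1.factorial : ℂ)) *
        ((s * x) ^ p.2 / (p.2.factorial : ℂ)))
      (g := fun k : ℕ => (y / x) ^ k) (hpair (t * x) (s * x)) hg) ?_
    rintro ⟨⟨n, m⟩, k⟩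
    simp only [hFd]
    rw [norm_mul, norm_mul _ ((y / x) ^ k)]
    gcongr
    rw [norm_pow, norm_pow]
    gcongr
    rw [norm_mul, norm_pow]
    exact mul_le_of_le_one_left (norm_nonneg _) (pow_le_one₀ (norm_nonneg l) hl.le)
  have hk : ∀ p : ℕ × ℕ, ∑' k, F (p, k) =
      (1 / ((Nat.factorial p.1 : ℂ) * (Nat.factorial p.2 : ℂ))) *
        (x ^ (p.1 + p.2 + 1) / (x - l ^ (p.1 + p.2) * y)) * t ^ p.1 * s ^ p.2 := by
    rintro ⟨n, m⟩
    simp only [hFd]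
    rw [tsum_mul_left, tsum_geometric_of_norm_lt_one (hlq _)]
    have h1 : (1 - l ^ (n + m) * (y / x))  = (x - l ^ (n + m) * y) / x := by
      field_simp
    rw [h1, inv_div, mul_pow, mul_pow, pow_succ, pow_add x]
    simp only [div_eq_mul_inv, mul_inv]
    ring
  have hp : ∀ k : ℕ, ∑' p, F (p, k) = (y / x) ^ k * Complex.exp (l ^ k * (t + s) * x) := by
    intro k
    have hE : ∀ z : ℂ, Complex.exp z = ∑' n : ℕ, z ^ n / (n.factorial : ℂ) := fun z => by
      rw [Complex.exp_eq_exp_ℂ, NormedSpace.exp_eq_tsum_div]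
    have h2 : l ^ k * (t + s) * x = l ^ k * (t * x) + l ^ k * (s * x) := by ring
    rw [h2, Complex.exp_add, hE, hE,
      tsum_mul_tsum_of_summable_norm (hexp _) (hexp _), ← tsum_mul_left]
    refine tsum_congr ?_
    rintro ⟨n, m⟩
    simp only [hFd]
    ring
  have hS := hF.prod.congr hk
  refine ⟨hS.norm, ?_⟩
  have e1 := hS.tsum_prod
  have e2 : ∑' p, ∑' k, F (p, k) = ∑' k, ∑' p, F (p, k) :=
    (Summable.tsum_comm (f := fun k p => F (p, k)) hF.prod_symm)
  rw [tsum_congr hk, tsum_congr hp] at e2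
  exact e1.symm.trans e2
end

section
/- Let λ, x, y, z be complex numbers with |λ| < 1 and |y| < |x|, and let f(u) = ∑_{m=0}^∞ ((−1)^m/(2m)!) u^m (so that f(u²) = cos u). Then ∑_{n=0}^∞ ((−1)^n/(2n)!) · x^{n+1}/(x − λ^n y) · z^n = ∑_{k=0}^∞ (y/x)^k f(λ^k x z) = ∑_{k=0}^∞ (y/x)^k ∑_{m=0}^∞ ((−1)^m/(2m)!) (λ^k x z)^m. -/
/-- Generalized Lambert series for `aₙ = (−1)ⁿ/(2n)!`, with generating function
`f(u) = ∑ₘ ((−1)ᵐ/(2m)!) uᵐ` (so that `f(u²) = cos u`). -/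
theorem generalized_lambert_cos (l x y z : ℂ)
    (hl : ‖l‖ < 1) (hyx : ‖y‖ < ‖x‖) :
    ∑' n : ℕ, ((-1 : ℂ) ^ n / (Nat.factorial (2 * n) : ℂ)) *
        (x ^ (n + 1) / (x - l ^ n * y)) * z ^ n
      = ∑' k : ℕ, (y / x) ^ k *
          ∑' m : ℕ, ((-1 : ℂ) ^ m / (Nat.factorial (2 * m) : ℂ)) *
            (l ^ k * x * z) ^ m := by
  have hx0 : 0 < ‖x‖ := lt_of_le_of_lt (norm_nonneg y) hyx
  have hx : x ≠ 0 := norm_pos_iff.mp hx0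
  have hr : ‖y / x‖ < 1 := by
    rw [norm_div, div_lt_one hx0]; exact hyx
  have hln : ∀ n : ℕ, ‖l ^ n‖ ≤ 1 := fun n => by
    rw [norm_pow]; exact pow_le_one₀ (norm_nonneg l) hl.le
  have hq : ∀ n : ℕ, ‖l ^ n * (y / x)‖ < 1 := fun n => by
    rw [norm_mul]
    exact lt_of_le_of_lt (mul_le_of_le_one_left (norm_nonneg _) (hln n)) hr
  let F : ℕ → ℕ → ℂ := fun n k =>
    ((-1 : ℂ) ^ n / (Nat.factorial (2 * n) : ℂ)) * (x * z) ^ n * (l ^ n * (y / x)) ^ k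
  have hF : Summable (Function.uncurry F) := by
    have h1 : Summable (fun n : ℕ => ‖x * z‖ ^ n / (Nat.factorial n : ℝ)) :=
      Real.summable_pow_div_factorial _
    have h2 : Summable (fun k : ℕ => ‖y / x‖ ^ k) :=
      summable_geometric_of_lt_one (norm_nonneg _) hr
    have h3 := h1.mul_of_nonneg h2 (fun n => by positivity) (fun k => by positivity)
    refine Summable.of_norm_bounded h3 ?_
    rintro ⟨n, k⟩
    simp only [Function.uncurry, F]
    rw [norm_mul, norm_mul, norm_div, norm_pow (-1 : ℂ), norm_neg, norm_one, one_pow,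
      norm_pow (x * z), norm_pow (l ^ n * (y / x)), norm_mul (l ^ n), Complex.norm_natCast]
    have hfac : (Nat.factorial n : ℝ) ≤ (Nat.factorial (2 * n) : ℝ) := by
      exact_mod_cast Nat.factorial_le (by omega)
    have hpos : (0 : ℝ) < (Nat.factorial n : ℝ) := by positivity
    apply mul_le_mul _ _ (by positivity) (by positivity)
    · rw [one_div, mul_comm, ← div_eq_mul_inv]
      gcongr
    · gcongr
      exact mul_le_of_le_one_left (norm_nonneg _) (hln n)
  calc _ = ∑' n : ℕ, ∑' k : ℕ, F n k := by
        refine tsum_congr fun n => ?_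
        simp only [F]
        rw [tsum_mul_left, tsum_geometric_of_norm_lt_one (hq n)]
        have e : (1 - l ^ n * (y / x)) = (x - l ^ n * y) / x := by
          field_simp
        rw [e, inv_div, mul_pow, pow_succ]
        ring
    _ = ∑' k : ℕ, ∑' n : ℕ, F n k := hF.tsum_comm.symm
    _ = _ := by
        refine tsum_congr fun k => ?_
        rw [← tsum_mul_left]
        refine tsum_congr fun n => ?_
        simp only [F]
        rw [mul_pow (l ^ n), mul_assoc (l ^ k), mul_pow (l ^ k), ← pow_mul, ← pow_mul,
          mul_comm n k]
        ring
end

section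
/- Let λ, x, y, z be complex numbers with |λ| < 1 and |y| < |x|. With g(u) = ∑_{n=0}^∞ ((−1)^n/(2n+1)!) u^n (the entire function satisfying g(u²) = sin(u)/u for u ≠ 0), then ∑_{n=0}^∞ ((−1)^n/(2n+1)!) · x^{n+1}/(x − λ^n y) · z^n = ∑_{k=0}^∞ (y/x)^k · g(λ^k x z). -/
/-- Generalized Lambert series for `aₙ = (−1)ⁿ/(2n+1)!`, with generating function
`g(u) = ∑ₘ ((−1)ᵐ/(2m+1)!) uᵐ` (so that `g(u²) = sin(u)/u` for `u ≠ 0`). -/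
theorem generalized_lambert_sin (l x y z : ℂ)
    (hl : ‖l‖ < 1) (hyx : ‖y‖ < ‖x‖) :
    ∑' n : ℕ, ((-1 : ℂ) ^ n / (Nat.factorial (2 * n + 1) : ℂ)) *
        (x ^ (n + 1) / (x - l ^ n * y)) * z ^ n
      = ∑' k : ℕ, (y / x) ^ k *
          ∑' m : ℕ, ((-1 : ℂ) ^ m / (Nat.factorial (2 * m + 1) : ℂ)) *
            (l ^ k * x * z) ^ m := by
  have hx0 : 0 < ‖x‖ := lt_of_le_of_lt (norm_nonneg y) hyx
  have hx : x ≠ 0 := norm_pos_iff.mp hx0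
  have hq : ‖y / x‖ < 1 := by
    rw [norm_div, div_lt_one hx0]; exact hyx
  have hln : ∀ n : ℕ, ‖l ^ n‖ ≤ 1 := fun n => by
    rw [norm_pow]; exact pow_le_one₀ (norm_nonneg _) hl.le
  have hS : Summable (Function.uncurry fun n k : ℕ =>
      ((-1 : ℂ) ^ n / (Nat.factorial (2 * n + 1) : ℂ)) * (x * z) ^ n * (l ^ n * (y / x)) ^ k) := by
    have h1 := Real.summable_pow_div_factorial ‖x * z‖
    have h2 := summable_geometric_of_lt_one (norm_nonneg _) hq
    have h3 := h1.mul_of_nonneg h2 (fun n => by positivity) (fun n => by positivity)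
    refine Summable.of_norm_bounded h3 ?_
    rintro ⟨n, k⟩
    simp only [Function.uncurry]
    rw [norm_mul, norm_mul, norm_div, norm_pow, norm_pow, norm_pow, norm_neg, norm_one, one_pow,
      Complex.norm_natCast, one_div, inv_mul_eq_div]
    have hf : (0 : ℝ) < (Nat.factorial n : ℝ) := by exact_mod_cast Nat.factorial_pos n
    have hf2 : (Nat.factorial n : ℝ) ≤ (Nat.factorial (2 * n + 1) : ℝ) := by
      exact_mod_cast Nat.factorial_le (by omega)
    have h4 : ‖l ^ n * (y / x)‖ ≤ ‖y / x‖ := by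
      rw [norm_mul]
      exact mul_le_of_le_one_left (norm_nonneg _) (hln n)
    gcongr
  calc _ = ∑' n : ℕ, ∑' k : ℕ, ((-1 : ℂ) ^ n / (Nat.factorial (2 * n + 1) : ℂ)) * (x * z) ^ n *
          (l ^ n * (y / x)) ^ k := by
        refine tsum_congr fun n => ?_
        have h4 : ‖l ^ n * (y / x)‖ < 1 := by
          rw [norm_mul]
          exact lt_of_le_of_lt (mul_le_of_le_one_left (norm_nonneg _) (hln n)) hq
        rw [tsum_mul_left, tsum_geometric_of_norm_lt_one h4]
        have h5 : x ^ (n + 1) / (x - l ^ n * y) = x ^ n * (1 - l ^ n * (y / x))⁻¹ := by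
          have : x - l ^ n * y = x * (1 - l ^ n * (y / x)) := by field_simp
          rw [this, pow_succ, div_eq_mul_inv, mul_inv, mul_assoc, mul_inv_cancel_left₀ hx]
        rw [h5, mul_pow]; ring
    _ = _ := by
        rw [← hS.tsum_comm]
        refine tsum_congr fun k => ?_
        rw [← tsum_mul_left]
        refine tsum_congr fun m => ?_
        simp only [mul_pow, ← pow_mul]
        rw [mul_comm k m]; ring
end

section
/- Let λ, x, y, t, s be complex numbers with |λ| < 1 and |y| < |x|. With f(u) = ∑_{n=0}^∞ ((−1)^n/(2n)!) u^n (the entire function satisfying f(u²) = cos u), then ∑_{n=0}^∞ ∑_{m=0}^∞ ((−1)^{n+m}/((2n)!(2m)!)) · x^{n+m+1}/(x − λ^{n+m} y) · t^n s^m = ∑_{k=0}^∞ (y/x)^k · f(λ^k t x) · f(λ^k s x), where the left-hand side is an absolutely convergent double series. -/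
theorem cosCoeff_summable_norm (u : ℂ) :
    Summable (fun n : ℕ => ‖((-1 : ℂ) ^ n / (Nat.factorial (2 * n) : ℂ)) * u ^ n‖) := by
  refine Summable.of_nonneg_of_le (fun _ => norm_nonneg _) (fun n => ?_)
    (Real.summable_pow_div_factorial ‖u‖)
  rw [norm_mul, norm_div, norm_pow, norm_neg, norm_one, one_pow, norm_pow, Complex.norm_natCast,
    one_div, mul_comm, ← div_eq_mul_inv]
  have h : (Nat.factorial n : ℝ) ≤ (Nat.factorial (2 * n) : ℝ) := by
    exact_mod_cast Nat.factorial_le (by omega)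
  have h0 : (0 : ℝ) < (Nat.factorial n : ℝ) := by exact_mod_cast Nat.factorial_pos n
  gcongr

/-- Rogers-type generalized Lambert series for `aₙ = (−1)ⁿ/(2n)!`, `bₘ = (−1)ᵐ/(2m)!`,
with generating function `f(u) = ∑ⱼ ((−1)ʲ/(2j)!) uʲ` (so that `f(u²) = cos u`). -/
theorem generalized_lambert_rogers_cos (l x y t s : ℂ)
    (hl : ‖l‖ < 1) (hyx : ‖y‖ < ‖x‖) :
    Summable (fun p : ℕ × ℕ =>
      ‖((-1 : ℂ) ^ (p.1 + p.2) /
          ((Nat.factorial (2 * p.1) : ℂ) * (Nat.factorial (2 * p.2) : ℂ))) *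
        (x ^ (p.1 + p.2 + 1) / (x - l ^ (p.1 + p.2) * y)) * t ^ p.1 * s ^ p.2‖) ∧
    ∑' n : ℕ, ∑' m : ℕ, ((-1 : ℂ) ^ (n + m) /
          ((Nat.factorial (2 * n) : ℂ) * (Nat.factorial (2 * m) : ℂ))) *
        (x ^ (n + m + 1) / (x - l ^ (n + m) * y)) * t ^ n * s ^ m
      = ∑' k : ℕ, (y / x) ^ k *
          (∑' j : ℕ, ((-1 : ℂ) ^ j / (Nat.factorial (2 * j) : ℂ)) * (l ^ k * t * x) ^ j) *
          (∑' j : ℕ, ((-1 : ℂ) ^ j / (Nat.factorial (2 * j) : ℂ)) * (l ^ k * s * x) ^ j) := by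
  have hx0 : 0 < ‖x‖ := lt_of_le_of_lt (norm_nonneg y) hyx
  have hx : x ≠ 0 := norm_pos_iff.mp hx0
  have hq : ‖y / x‖ < 1 := by rw [norm_div, div_lt_one hx0]; exact hyx
  set A : ℂ → ℕ → ℂ := fun u n => ((-1 : ℂ) ^ n / (Nat.factorial (2 * n) : ℂ)) * u ^ n with hA
  have hAs : ∀ u, Summable (fun n => ‖A u n‖) := fun u => cosCoeff_summable_norm u
  have hAl : ∀ u (k n : ℕ), A (l ^ k * u * x) n = A (u * x) n * (l ^ k) ^ n := by
    intro u k n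
    simp only [hA]
    rw [mul_assoc (l ^ k), mul_pow (l ^ k)]
    ring
  -- the triple family
  let F : (ℕ × ℕ) × ℕ → ℂ := fun q =>
    (y / x) ^ q.2 * (A (l ^ q.2 * t * x) q.1.1 * A (l ^ q.2 * s * x) q.1.2)
  have hpair : Summable (fun p : ℕ × ℕ => ‖A (t * x) p.1‖ * ‖A (s * x) p.2‖) :=
    (hAs (t * x)).mul_of_nonneg (hAs (s * x)) (fun _ => norm_nonneg _) (fun _ => norm_nonneg _)
  have hgeo : Summable (fun k : ℕ => ‖y / x‖ ^ k) :=
    summable_geometric_of_lt_one (norm_nonneg _) hq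
  have hF : Summable F := by
    refine Summable.of_norm_bounded
      (hpair.mul_of_nonneg hgeo (fun _ => by positivity) (fun _ => by positivity)) ?_
    rintro ⟨⟨n, m⟩, k⟩
    simp only [F, hAl, norm_mul, norm_pow]
    have h1 : (‖l‖ ^ k) ^ n ≤ 1 :=
      pow_le_one₀ (by positivity) (pow_le_one₀ (norm_nonneg _) hl.le)
    have h2 : (‖l‖ ^ k) ^ m ≤ 1 :=
      pow_le_one₀ (by positivity) (pow_le_one₀ (norm_nonneg _) hl.le)
    have h3 : ‖A (t * x) n‖ * (‖l‖ ^ k) ^ n ≤ ‖A (t * x) n‖ :=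
      mul_le_of_le_one_right (norm_nonneg _) h1
    have h4 : ‖A (s * x) m‖ * (‖l‖ ^ k) ^ m ≤ ‖A (s * x) m‖ :=
      mul_le_of_le_one_right (norm_nonneg _) h2
    rw [mul_comm]
    gcongr
  let G : ℕ × ℕ → ℂ := fun p => ((-1 : ℂ) ^ (p.1 + p.2) /
          ((Nat.factorial (2 * p.1) : ℂ) * (Nat.factorial (2 * p.2) : ℂ))) *
        (x ^ (p.1 + p.2 + 1) / (x - l ^ (p.1 + p.2) * y)) * t ^ p.1 * s ^ p.2
  have hfib : ∀ p : ℕ × ℕ, HasSum (fun k => F (p, k)) (G p) := by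
    rintro ⟨n, m⟩
    have hr : ‖l ^ (n + m) * (y / x)‖ < 1 := by
      rw [norm_mul, norm_pow]
      exact lt_of_le_of_lt (mul_le_of_le_one_left (norm_nonneg _)
        (pow_le_one₀ (norm_nonneg _) hl.le)) hq
    have hne : x - l ^ (n + m) * y ≠ 0 := by
      intro h
      have : l ^ (n + m) * (y / x) = 1 := by
        rw [← mul_div_assoc, ← sub_eq_zero.mp h, div_self hx]
      rw [this, norm_one] at hr
      exact lt_irrefl _ hr
    have hg := (hasSum_geometric_of_norm_lt_one hr).mul_left (A (t * x) n * A (s * x) m)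
    have e1 : (1 - l ^ (n + m) * (y / x))⁻¹ = x / (x - l ^ (n + m) * y) := by
      rw [← inv_div]
      congr 1
      field_simp
    have eF : (fun k => F ((n, m), k)) =
        fun k => A (t * x) n * A (s * x) m * (l ^ (n + m) * (y / x)) ^ k := by
      funext k
      simp only [F, hAl]
      rw [mul_pow (l ^ (n + m)), ← pow_mul, ← pow_mul, ← pow_mul, add_mul, pow_add,
        mul_comm k n, mul_comm k m]
      ring
    have eG : G (n, m) = A (t * x) n * A (s * x) m * (1 - l ^ (n + m) * (y / x))⁻¹ := by
      rw [e1]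
      simp only [G, hA]
      rw [mul_pow, mul_pow, pow_add (-1 : ℂ), pow_succ, pow_add x, ← div_mul_div_comm]
      ring
    rw [eF, eG]
    exact hg
  have hG : Summable G := by
    have := hF.prod
    simpa only [(hfib _).tsum_eq] using this
  refine ⟨hG.norm, ?_⟩
  have e1 : ∑' p, G p = ∑' n : ℕ, ∑' m : ℕ, G (n, m) := hG.tsum_prod
  have e2 : ∑' q, F q = ∑' p, G p := by
    rw [hF.tsum_prod]
    exact tsum_congr fun p => (hfib p).tsum_eq
  have e3 : ∑' q, F q = ∑' k : ℕ, ∑' p : ℕ × ℕ, F (p, k) := by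
    rw [hF.tsum_prod]
    exact (Summable.tsum_comm (f := fun p k => F (p, k)) hF).symm
  change ∑' n : ℕ, ∑' m : ℕ, G (n, m) = ∑' k : ℕ, (y / x) ^ k *
    (∑' j : ℕ, A (l ^ k * t * x) j) * (∑' j : ℕ, A (l ^ k * s * x) j)
  rw [← e1, ← e2, e3]
  refine tsum_congr fun k => ?_
  rw [mul_assoc, tsum_mul_tsum_of_summable_norm (hAs _) (hAs _), ← tsum_mul_left]
end

section
/- Let d ≥ 1 be a natural number and let λ, x, y, z be complex numbers with |λ| < 1, |y| < |x|, and |x·z| < 1. Then ∑_{n=0}^∞ C(n+d−1, d) · x^{n+1}/(x − λ^n y) · z^n = ∑_{k=0}^∞ (y/x)^k · (λ^k x z)/(1 − λ^k x z)^{d+1}, where C(n+d−1, d) denotes the binomial coefficient. -/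
lemma polytopic_hasSum (d : ℕ) (hd : 1 ≤ d) {𝕜 : Type*} [RCLike 𝕜] (u : 𝕜) (hu : ‖u‖ < 1) :
    HasSum (fun n : ℕ => ((n + d - 1).choose d : 𝕜) * u ^ n) (u / (1 - u) ^ (d + 1)) := by
  have h := (hasSum_choose_mul_geometric_of_norm_lt_one d hu).mul_left u
  rw [← hasSum_nat_add_iff' 1]
  have h0 : (d - 1).choose d = 0 := Nat.choose_eq_zero_of_lt (by omega)
  have e1 : (fun n : ℕ => ((n + 1 + d - 1).choose d : 𝕜) * u ^ (n + 1))
      = fun n : ℕ => u * (((n + d).choose d : 𝕜) * u ^ n) := by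
    funext n
    have : n + 1 + d - 1 = n + d := by omega
    rw [this]; ring
  have e2 : u / (1 - u) ^ (d + 1) - ∑ i ∈ Finset.range 1, ((i + d - 1).choose d : 𝕜) * u ^ i
      = u * (1 / (1 - u) ^ (d + 1)) := by
    simp [h0, div_eq_mul_inv]
  rw [e1, e2]
  exact h

/-- Generalized Lambert series for the simplicial `d`-polytopic numbers
`aₙ = C(n+d−1, d)`, with generating function `u/(1−u)^(d+1)`. -/
theorem generalized_lambert_polytopic (d : ℕ) (hd : 1 ≤ d) (l x y z : ℂ)
    (hl : ‖l‖ < 1) (hyx : ‖y‖ < ‖x‖) (hxz : ‖x * z‖ < 1) :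
    ∑' n : ℕ, ((n + d - 1).choose d : ℂ) * (x ^ (n + 1) / (x - l ^ n * y)) * z ^ n
      = ∑' k : ℕ, (y / x) ^ k *
          (l ^ k * x * z / (1 - l ^ k * x * z) ^ (d + 1)) := by
  have hxpos : 0 < ‖x‖ := lt_of_le_of_lt (norm_nonneg _) hyx
  have hx : x ≠ 0 := norm_pos_iff.mp hxpos
  have hq : ‖y / x‖ < 1 := by rw [norm_div]; exact (div_lt_one hxpos).2 hyx
  have hlk : ∀ k : ℕ, ‖l ^ k‖ ≤ 1 := fun k => by
    rw [norm_pow]; exact pow_le_one₀ (norm_nonneg _) hl.le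
  have hmul : ∀ (k : ℕ) (w : ℂ), ‖w‖ < 1 → ‖l ^ k * w‖ < 1 := fun k w hw => by
    rw [norm_mul]
    exact lt_of_le_of_lt (mul_le_of_le_one_left (norm_nonneg _) (hlk k)) hw
  let f : ℕ → ℕ → ℂ := fun k n =>
    ((n + d - 1).choose d : ℂ) * (x * z) ^ n * (y / x) ^ k * l ^ (n * k)
  have hs : Summable (Function.uncurry f) := by
    have h1 : Summable (fun n : ℕ => ((n + d - 1).choose d : ℝ) * ‖x * z‖ ^ n) :=
      (polytopic_hasSum d hd (‖x * z‖) (by simpa using hxz)).summable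
    have h2 : Summable (fun k : ℕ => ‖y / x‖ ^ k) :=
      summable_geometric_of_lt_one (norm_nonneg _) hq
    have h3 := h2.mul_of_nonneg h1 (fun _ => by positivity) (fun _ => by positivity)
    refine Summable.of_norm_bounded h3 ?_
    rintro ⟨k, n⟩
    simp only [Function.uncurry, f]
    rw [norm_mul, norm_mul, norm_mul, norm_pow (x * z), norm_pow (y / x), Complex.norm_natCast]
    calc _ ≤ ((n + d - 1).choose d : ℝ) * ‖x * z‖ ^ n * ‖y / x‖ ^ k * 1 := by
          gcongr; exact hlk _
      _ = _ := by ring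
  have hL : ∀ n : ℕ, ((n + d - 1).choose d : ℂ) * (x ^ (n + 1) / (x - l ^ n * y)) * z ^ n
      = ∑' k, f k n := fun n => by
    have hr := hmul n _ hq
    have hne : x - l ^ n * y ≠ 0 := by
      intro h
      have : l ^ n * (y / x) = 1 := by
        rw [← mul_div_assoc, ← sub_eq_zero.mp h, div_self hx]
      rw [this] at hr; simp at hr
    have h := (hasSum_geometric_of_norm_lt_one hr).mul_left
      (((n + d - 1).choose d : ℂ) * (x * z) ^ n)
    have e : (fun k => f k n) = fun k => ((n + d - 1).choose d : ℂ) * (x * z) ^ n *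
        (l ^ n * (y / x)) ^ k := by
      funext k; simp only [f]; rw [pow_mul, mul_pow (l ^ n)]; ring
    rw [e, h.tsum_eq]
    have e2 : 1 - l ^ n * (y / x) = (x - l ^ n * y) / x := by field_simp
    rw [e2, inv_div, mul_pow]; ring
  have hR : ∀ k : ℕ, (y / x) ^ k * (l ^ k * x * z / (1 - l ^ k * x * z) ^ (d + 1))
      = ∑' n, f k n := fun k => by
    have h := (polytopic_hasSum d hd _ (hmul k _ hxz)).mul_left ((y / x) ^ k)
    have e : (fun n => f k n) = fun n => (y / x) ^ k * (((n + d - 1).choose d : ℂ) *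
        (l ^ k * (x * z)) ^ n) := by
      funext n; simp only [f]; rw [mul_comm n k, pow_mul, mul_pow (l ^ k)]; ring
    rw [e, h.tsum_eq, mul_assoc (l ^ k)]
  simp_rw [hL, hR]
  exact hs.tsum_comm
end

section
/- Let s, t be complex numbers with s² + 4t ≠ 0 and t ≠ 0, and let φ = (s + √(s²+4t))/2 and ψ = (s − √(s²+4t))/2 be the two roots of X² − sX − t = 0 (so φ ≠ ψ). Let u : ℕ → ℂ be the Lucas sequence defined by u(0) = 0, u(1) = 1, u(n+2) = s·u(n+1) + t·u(n). Let λ, x, y, z be complex numbers with |λ| < 1, |y| < |x|, |φ·x·z| < 1, and |ψ·x·z| < 1. Then ∑_{n=0}^∞ u(n) · x^{n+1}/(x − λ^n y) · z^n = (1/(φ − ψ)) · ∑_{k=0}^∞ (y/x)^k · (1/(1 − φ λ^k x z) − 1/(1 − ψ λ^k x z)). -/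
theorem hasSum_congr_aux {f g : ℕ → ℂ} {S : ℂ} (h : HasSum f S) (e : ∀ n, g n = f n) :
    HasSum g S := by
  rw [show g = f from funext e]; exact h

theorem lambert_fubini_aux (a q l : ℂ) (ha : ‖a‖ < 1) (hq : ‖q‖ < 1) (hl : ‖l‖ < 1) :
    ∃ S : ℂ, HasSum (fun n : ℕ => a ^ n * (1 / (1 - l ^ n * q))) S ∧
      HasSum (fun k : ℕ => q ^ k * (1 / (1 - a * l ^ k))) S := by
  have hlp : ∀ n : ℕ, ‖l ^ n‖ ≤ 1 := fun n => by
    rw [norm_pow]; exact pow_le_one₀ (norm_nonneg _) hl.le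
  have hsum : Summable (fun p : ℕ × ℕ => a ^ p.1 * q ^ p.2 * l ^ (p.1 * p.2)) := by
    have h1 : Summable (fun n : ℕ => ‖a‖ ^ n) :=
      summable_geometric_of_lt_one (norm_nonneg _) ha
    have h2 : Summable (fun n : ℕ => ‖q‖ ^ n) :=
      summable_geometric_of_lt_one (norm_nonneg _) hq
    have h3 := h1.mul_of_nonneg h2 (fun n => by positivity) (fun n => by positivity)
    refine Summable.of_norm_bounded h3 (fun p => ?_)
    rw [norm_mul, norm_mul, norm_pow a, norm_pow q]
    exact mul_le_of_le_one_right (by positivity) (hlp _)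
  have hS := hsum.hasSum
  refine ⟨_, hS.prod_fiberwise (fun n => ?_),
    ((Equiv.prodComm ℕ ℕ).hasSum_iff.mpr hS).prod_fiberwise (fun k => ?_)⟩
  · have hlt : ‖l ^ n * q‖ < 1 := by
      rw [norm_mul]
      exact (mul_le_of_le_one_left (norm_nonneg _) (hlp n)).trans_lt hq
    have := (hasSum_geometric_of_norm_lt_one hlt).mul_left (a ^ n)
    rw [one_div]
    refine hasSum_congr_aux (this) (fun m => ?_)
    simp only [Function.comp, Equiv.prodComm_apply, Prod.swap]
    rw [mul_pow, ← pow_mul]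
    ring
  · have hlt : ‖a * l ^ k‖ < 1 := by
      rw [norm_mul]
      exact (mul_le_of_le_one_right (norm_nonneg _) (hlp k)).trans_lt ha
    have := (hasSum_geometric_of_norm_lt_one hlt).mul_left (q ^ k)
    rw [one_div]
    refine hasSum_congr_aux (this) (fun m => ?_)
    simp only [Function.comp, Equiv.prodComm_apply, Prod.swap]
    rw [mul_pow, ← pow_mul]
    ring

/-- Generalized Lambert series for the Lucas sequence `u` on parameters `s, t`,
where `φ = (s + √(s²+4t))/2` and `ψ = (s − √(s²+4t))/2` are the two roots of
`X² − sX − t = 0` (here `δ` denotes a complex square root of `s² + 4t`). -/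
theorem generalized_lambert_lucas (s t : ℂ) (hdisc : s ^ 2 + 4 * t ≠ 0) (ht : t ≠ 0)
    (δ φ ψ : ℂ) (hδ : δ ^ 2 = s ^ 2 + 4 * t)
    (hφ : φ = (s + δ) / 2) (hψ : ψ = (s - δ) / 2)
    (u : ℕ → ℂ) (hu0 : u 0 = 0) (hu1 : u 1 = 1)
    (hrec : ∀ n, u (n + 2) = s * u (n + 1) + t * u n)
    (l x y z : ℂ) (hl : ‖l‖ < 1) (hyx : ‖y‖ < ‖x‖)
    (hφxz : ‖φ * x * z‖ < 1) (hψxz : ‖ψ * x * z‖ < 1) :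
    ∑' n : ℕ, u n * (x ^ (n + 1) / (x - l ^ n * y)) * z ^ n
      = (1 / (φ - ψ)) * ∑' k : ℕ, (y / x) ^ k *
          (1 / (1 - φ * l ^ k * x * z) - 1 / (1 - ψ * l ^ k * x * z)) := by
  have hδ0 : δ ≠ 0 := by
    rintro rfl
    exact hdisc (by rw [← hδ]; ring)
  have hd : φ - ψ = δ := by rw [hφ, hψ]; ring
  have hd0 : φ - ψ ≠ 0 := hd ▸ hδ0
  have hφ2 : φ ^ 2 = s * φ + t := by
    rw [hφ]; linear_combination hδ / 4
  have hψ2 : ψ ^ 2 = s * ψ + t := by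
    rw [hψ]; linear_combination hδ / 4
  have hu : ∀ n, (φ - ψ) * u n = φ ^ n - ψ ^ n ∧
      (φ - ψ) * u (n + 1) = φ ^ (n + 1) - ψ ^ (n + 1) := by
    intro n
    induction n with
    | zero => simp [hu0, hu1]
    | succ n ih =>
      refine ⟨ih.2, ?_⟩
      rw [show n + 1 + 1 = n + 2 from rfl, hrec]
      linear_combination s * ih.2 + t * ih.1 - φ ^ n * hφ2 + ψ ^ n * hψ2
  have hx : x ≠ 0 := norm_pos_iff.mp ((norm_nonneg y).trans_lt hyx)
  have hq : ‖y / x‖ < 1 := by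
    rw [norm_div]
    exact (div_lt_one (norm_pos_iff.mpr hx)).mpr hyx
  obtain ⟨A, hA1, hA2⟩ := lambert_fubini_aux (φ * x * z) (y / x) l hφxz hq hl
  obtain ⟨B, hB1, hB2⟩ := lambert_fubini_aux (ψ * x * z) (y / x) l hψxz hq hl
  have hL : HasSum (fun n : ℕ => u n * (x ^ (n + 1) / (x - l ^ n * y)) * z ^ n)
      (1 / (φ - ψ) * (A - B)) := by
    refine hasSum_congr_aux ((hA1.sub hB1).mul_left (1 / (φ - ψ))) (fun n => ?_)
    have hun : u n = (φ ^ n - ψ ^ n) / (φ - ψ) := by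
      rw [eq_div_iff hd0, mul_comm]; exact (hu n).1
    have hden : x - l ^ n * y = x * (1 - l ^ n * (y / x)) := by
      field_simp
    rw [hun, hden, pow_succ, mul_comm (x ^ n) x, mul_div_mul_left _ _ hx]
    simp only [mul_pow]
    ring
  have hR : HasSum (fun k : ℕ => (y / x) ^ k *
      (1 / (1 - φ * l ^ k * x * z) - 1 / (1 - ψ * l ^ k * x * z))) (A - B) := by
    refine hasSum_congr_aux (hA2.sub hB2) (fun k => ?_)
    rw [show φ * l ^ k * x * z = φ * x * z * l ^ k by ring,
      show ψ * l ^ k * x * z = ψ * x * z * l ^ k by ring]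
    ring
  rw [hL.tsum_eq, hR.tsum_eq]
end
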